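/- arXiv:1905.09410 — 2 statements merged into one kernel-verified Lean document; each statement's English description precedes it below -/
import Mathlib

section
/- Let d ≥ 3, 1 ≤ α < d/2 and suppose 𝔼[z(0)] < ∞. Then for every R > 0, ℙ-almost surely, inf over x ∈ ℤ^{1+d} with |x| ≤ R t^{1/2} of P^ω₀(X_t = x) / P̄₀(X_t = x) tends to 0 as t → ∞, where P̄₀(X_t = x) := P₀((S¹_{𝔼[z(0)]·t}, S²_t) = x) is the transition probability of the walk in the averaged conductance 𝔼[ω]; in particular the quenched local central limit theorem fails. -/
open MeasureTheory ProbabilityTheory Filter Set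

noncomputable section

/-- `n`-step transition probabilities of the discrete-time simple random walk on `ℤ^m`. -/
def srwKernel (m : ℕ) : ℕ → (Fin m → ℤ) → (Fin m → ℤ) → ℝ
  | 0, x, y => if x = y then 1 else 0
  | n + 1, x, y =>
      (∑ i : Fin m, (srwKernel m n (Function.update x i (x i + 1)) y
        + srwKernel m n (Function.update x i (x i - 1)) y)) / (2 * m)

/-- Transition kernel of the continuous-time simple random walk on `ℤ^m` which jumps to
each of its `2m` nearest neighbours at rate `1` (total jump rate `2m`). -/
def heatKernel (m : ℕ) (t : ℝ) (x y : Fin m → ℤ) : ℝ :=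
  ∑' n : ℕ, Real.exp (-(2 * m) * t) * ((2 * m) * t) ^ n / n.factorial * srwKernel m n x y

/-- `(P, S)` is (a realization of) the continuous-time simple random walk on `ℤ^m`:
under `P x` the process `S` starts at `x`, has right-continuous (piecewise constant)
paths, and its finite-dimensional distributions are given by the heat kernel. -/
structure IsCTSRW (m : ℕ) {Ω : Type*} [MeasurableSpace Ω]
    (P : (Fin m → ℤ) → Measure Ω) (S : ℝ → Ω → (Fin m → ℤ)) : Prop where
  prob : ∀ x, IsProbabilityMeasure (P x)
  meas : Measurable fun p : ℝ × Ω => S p.1 p.2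
  start : ∀ x, ∀ᵐ ω ∂ P x, S 0 ω = x
  rightCont : ∀ x, ∀ᵐ ω ∂ P x, ∀ t : ℝ, 0 ≤ t →
    ∃ ε > (0 : ℝ), ∀ u, t ≤ u → u < t + ε → S u ω = S t ω
  fdd : ∀ x (n : ℕ) (t : Fin (n + 1) → ℝ), 0 ≤ t 0 →
    (∀ i : Fin n, t i.castSucc ≤ t i.succ) →
    ∀ y : Fin (n + 1) → (Fin m → ℤ),
      (P x {ω | ∀ i, S (t i) ω = y i}).toReal
        = heatKernel m (t 0) x (y 0)
          * ∏ i : Fin n, heatKernel m (t i.succ - t i.castSucc) (y i.castSucc) (y i.succ)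

/-- `z` is an i.i.d. nonnegative random scenery on `ℤ^d` whose common upper tail decays
like `r^{-α+o(1)}`. -/
structure IsScenery (d : ℕ) (α : ℝ) {Ω : Type*} [MeasurableSpace Ω]
    (μ : Measure Ω) (z : (Fin d → ℤ) → Ω → ℝ) : Prop where
  prob : IsProbabilityMeasure μ
  meas : ∀ x, Measurable (z x)
  nonneg : ∀ x ω, 0 ≤ z x ω
  indep : iIndepFun z μ
  ident : ∀ x, IdentDistrib (z x) (z 0) μ μ
  tail : Tendsto (fun r : ℝ => Real.log (μ {ω | r < z 0 ω}).toReal / Real.log r)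
    atTop (nhds (-α))

/-- The random walk in random scenery `A(t) = ∫₀ᵗ z(S_u) du`. -/
def rwrs {Ωz Ωw : Type*} (d : ℕ) (z : (Fin d → ℤ) → Ωz → ℝ)
    (S : ℝ → Ωw → (Fin d → ℤ)) (t : ℝ) (ζ : Ωz) (ω : Ωw) : ℝ :=
  ∫ u in Set.Ioc (0 : ℝ) t, z (S u ω) ζ

end
open MeasureTheory ProbabilityTheory Filter Set

noncomputable section

/-- The clock process `A²(t) = ∫₀ᵗ z(S²_u) du`, where `S²` is the second (ℤ^d-valued)
component of the walk on `ℤ^{1+d}`. -/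
def clock (d : ℕ) {Ωz Ωw : Type*} (z : (Fin d → ℤ) → Ωz → ℝ)
    (S : ℝ → Ωw → (Fin (d + 1) → ℤ)) (t : ℝ) (ζ : Ωz) (ω : Ωw) : ℝ :=
  ∫ u in Set.Ioc (0 : ℝ) t, z (fun i => S u ω i.succ) ζ

/-- The variable-speed random walk `X_t = (S¹_{A²(t)}, S²_t)` in the layered conductance
field `ω(x, x±e₁) = z(x₂)`, `ω(x, x±e_i) = 1` for `i ≥ 2` (coordinate `0` of the walk on
`ℤ^{1+d}` is the ℤ-coordinate, coordinates `1,…,d` form the ℤ^d-coordinate). -/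
def layeredWalk (d : ℕ) {Ωz Ωw : Type*} (z : (Fin d → ℤ) → Ωz → ℝ)
    (S : ℝ → Ωw → (Fin (d + 1) → ℤ)) (t : ℝ) (ζ : Ωz) (ω : Ωw) : ℤ × (Fin d → ℤ) :=
  (S (clock d z S t ζ ω) ω 0, fun i => S t ω i.succ)

/-- Euclidean norm of a point of `ℤ^{1+d} = ℤ × ℤ^d`. -/
def euclNormProd (d : ℕ) (x : ℤ × (Fin d → ℤ)) : ℝ :=
  Real.sqrt ((x.1 : ℝ) ^ 2 + ∑ i, (x.2 i : ℝ) ^ 2)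

end

/-!
The averaged walk sits at a point at distance `O(√t)` with probability of order
`t ^ (-(1 + d) / 2)`. For the quenched walk, fix `x₂` and ask that `S²_t = x₂`; this has probability
`O(t ^ (-d / 2))`. Given that, `S²` has typically been sitting at `x₂` since some time `t - h`, so
that the clock is at least `h z(x₂)`; as `S¹` is independent of the clock, it is at a given point
with conditional probability at most `(h z(x₂)) ^ (-1 / 2)`. The event that `S²` reached `x₂` only
after time `t - h` costs a further factor `O(h)`, so summing over `h = 4 ^ (-n)` gives
`P^ω₀(X_t = (1, x₂)) = O(t ^ (-d / 2) z(x₂) ^ (-1 / 2))`. Since `2 α < d`, a Borel–Cantelli argument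
for the maximum of the scenery over a box of side `≍ √t` produces `|x₂| = O(√t)` with
`z(x₂) / t` as large as desired, and there the quenched probability is negligible.
The first coordinate is taken to be `1` rather than `0` so that `S¹` cannot be there while the clock
is still at zero.
-/

open scoped ENNReal NNReal Topology

section GeneratingFunction

/-- The exponential generating function `∑ a(n) tⁿ / n!` of a real sequence. It turns the
binomial convolution of step counts into the product of the corresponding kernels. -/
noncomputable def expGenFun (a : ℕ → ℝ) (t : ℝ) : ℝ := ∑' n : ℕ, t ^ n / n.factorial * a n

lemma summable_norm_expGenFun {a : ℕ → ℝ} {B : ℝ} (ha : ∀ n, |a n| ≤ B ^ n) (t : ℝ) :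
    Summable fun n : ℕ ↦ ‖t ^ n / n.factorial * a n‖ := by
  refine .of_nonneg_of_le (fun _ ↦ norm_nonneg _) (fun n ↦ ?_)
    (Real.summable_pow_div_factorial (|t| * B))
  rw [Real.norm_eq_abs, abs_mul, abs_div, abs_pow, Nat.abs_cast, mul_pow, mul_div_right_comm]
  gcongr
  exact ha n

lemma expGenFun_mul {a b : ℕ → ℝ} {A B : ℝ} (ha : ∀ n, |a n| ≤ A ^ n)
    (hb : ∀ n, |b n| ≤ B ^ n) (t : ℝ) :
    expGenFun a t * expGenFun b t = expGenFun (fun n ↦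
      ∑ p ∈ Finset.HasAntidiagonal.antidiagonal n, (n.choose p.1 : ℝ) * (a p.1 * b p.2)) t := by
  rw [expGenFun, expGenFun, expGenFun, tsum_mul_tsum_eq_tsum_sum_antidiagonal_of_summable_norm
    (summable_norm_expGenFun ha t) (summable_norm_expGenFun hb t)]
  refine tsum_congr fun n ↦ ?_
  rw [Finset.mul_sum]
  refine Finset.sum_congr rfl fun p hp ↦ ?_
  obtain rfl : p.1 + p.2 = n := Finset.HasAntidiagonal.mem_antidiagonal.1 hp
  rw [Nat.cast_add_choose, pow_add]
  field_simp

end GeneratingFunction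

section PathCounts

/-- The number of nearest-neighbour paths of length `n` in `ℤ^m` from `x` to `y`. -/
noncomputable def pathCount (m n : ℕ) (x y : Fin m → ℤ) : ℝ := (2 * m) ^ n * srwKernel m n x y

lemma pathCount_zero (m : ℕ) (x y : Fin m → ℤ) :
    pathCount m 0 x y = if x = y then 1 else 0 := by
  simp [pathCount, srwKernel]

lemma pathCount_succ (m n : ℕ) (x y : Fin m → ℤ) : pathCount m (n + 1) x y =
    ∑ i, (pathCount m n (Function.update x i (x i + 1)) y
      + pathCount m n (Function.update x i (x i - 1)) y) := by
  simp only [pathCount, srwKernel, ← mul_add, ← Finset.mul_sum]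
  rcases m.eq_zero_or_pos with rfl | hm
  · simp
  · rw [pow_succ]
    field_simp

lemma pathCount_nonneg (m n : ℕ) (x y : Fin m → ℤ) : 0 ≤ pathCount m n x y := by
  induction n generalizing x with
  | zero => rw [pathCount_zero]; positivity
  | succ n ih =>
    rw [pathCount_succ]
    exact Finset.sum_nonneg fun i _ ↦ add_nonneg (ih _) (ih _)

lemma pathCount_le (m n : ℕ) (x y : Fin m → ℤ) : pathCount m n x y ≤ (2 * m) ^ n := by
  induction n generalizing x with
  | zero => rw [pathCount_zero, pow_zero]; split_ifs <;> norm_num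
  | succ n ih =>
    rw [pathCount_succ]
    refine (Finset.sum_le_sum fun i _ ↦ add_le_add (ih _) (ih _)).trans_eq ?_
    simp only [Finset.sum_const, Finset.card_univ, Fintype.card_fin, nsmul_eq_mul]
    ring

/-- The number of `±1`-paths of length `n` in `ℤ` from `0` to `k`. -/
def lineCount : ℕ → ℤ → ℝ
  | 0, k => if k = 0 then 1 else 0
  | n + 1, k => lineCount n (k - 1) + lineCount n (k + 1)

lemma lineCount_nonneg (n : ℕ) (k : ℤ) : 0 ≤ lineCount n k := by
  induction n generalizing k with
  | zero => rw [lineCount]; positivity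
  | succ n ih => exact add_nonneg (ih _) (ih _)

lemma hasSum_lineCount (n : ℕ) : HasSum (lineCount n) (2 ^ n) := by
  induction n with
  | zero => simpa only [lineCount, pow_zero] using hasSum_ite_eq (0 : ℤ) (1 : ℝ)
  | succ n ih =>
    rw [pow_succ, mul_two]
    exact ((Equiv.subRight (1 : ℤ)).hasSum_iff.2 ih).add ((Equiv.addRight (1 : ℤ)).hasSum_iff.2 ih)

lemma abs_lineCount_le (n : ℕ) (k : ℤ) : |lineCount n k| ≤ 2 ^ n := by
  rw [abs_of_nonneg (lineCount_nonneg n k)]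
  exact le_hasSum (hasSum_lineCount n) k fun _ _ ↦ lineCount_nonneg n _

lemma abs_pathCount_le (m n : ℕ) (x y : Fin m → ℤ) : |pathCount m n x y| ≤ (2 * m) ^ n := by
  rw [abs_of_nonneg (pathCount_nonneg m n x y)]
  exact pathCount_le m n x y

lemma eq_iff_zero_and_tail {α : Type*} {m : ℕ} (x y : Fin (m + 1) → α) :
    x = y ↔ x 0 = y 0 ∧ Fin.tail x = Fin.tail y := by
  rw [funext_iff, Fin.forall_fin_succ, funext_iff]
  rfl

lemma pathCount_zero_dim_succ (m : ℕ) (x y : Fin (m + 1) → ℤ) : pathCount (m + 1) 0 x y =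
    lineCount 0 (y 0 - x 0) * pathCount m 0 (Fin.tail x) (Fin.tail y) := by
  simp only [pathCount_zero, lineCount, eq_iff_zero_and_tail x, sub_eq_zero, eq_comm (a := y 0),
    ite_and, ite_mul, one_mul, zero_mul]

lemma pathCount_dim_succ (m n : ℕ) (x y : Fin (m + 1) → ℤ) : pathCount (m + 1) n x y =
    ∑ p ∈ Finset.HasAntidiagonal.antidiagonal n, (n.choose p.1 : ℝ) *
      (lineCount p.1 (y 0 - x 0) * pathCount m p.2 (Fin.tail x) (Fin.tail y)) := by
  induction n generalizing x with
  | zero => simp [pathCount_zero_dim_succ]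
  | succ n ih =>
    rw [pathCount_succ, Fin.sum_univ_succ, Finset.sum_antidiagonal_choose_succ_mul
      (fun j l ↦ lineCount j (y 0 - x 0) * pathCount m l (Fin.tail x) (Fin.tail y)), add_comm]
    congr 1
    · simp only [ih, pathCount_succ m, Finset.mul_sum]
      rw [Finset.sum_comm]
      refine Finset.sum_congr rfl fun i _ ↦ ?_
      rw [← Finset.sum_add_distrib]
      refine Finset.sum_congr rfl fun p _ ↦ ?_
      simp only [Fin.tail_update_succ, Function.update_of_ne (Fin.succ_ne_zero i).symm, Fin.tail]
      ring
    · simp only [ih]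
      rw [← Finset.sum_add_distrib]
      refine Finset.sum_congr rfl fun p hp ↦ ?_
      rw [← Nat.choose_symm_of_eq_add (Finset.HasAntidiagonal.mem_antidiagonal.1 hp).symm]
      simp only [Fin.tail_update_zero, Function.update_self, lineCount, sub_add_eq_sub_sub,
        sub_sub_eq_add_sub, add_sub_right_comm]
      ring

end PathCounts

section HeatKernel

/-- The transition kernel of the walk on `ℤ` jumping to each neighbour at rate `1`, as a function
of the displacement. -/
noncomputable def lineKernel (t : ℝ) (k : ℤ) : ℝ :=
  Real.exp (-2 * t) * expGenFun (lineCount · k) t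

/-- The transition kernel of the walk on `ℤ^m` jumping to each neighbour at rate `1`, as a
function of the displacement, in product form. -/
noncomputable def latticeKernel (m : ℕ) (t : ℝ) (v : Fin m → ℤ) : ℝ := ∏ i, lineKernel t (v i)

lemma heatKernel_eq_expGenFun (m : ℕ) (t : ℝ) (x y : Fin m → ℤ) :
    heatKernel m t x y = Real.exp (-(2 * m) * t) * expGenFun (pathCount m · x y) t := by
  rw [heatKernel, expGenFun, ← tsum_mul_left]
  refine tsum_congr fun n ↦ ?_
  rw [pathCount, mul_pow]
  ring

lemma heatKernel_dim_succ (m : ℕ) (t : ℝ) (x y : Fin (m + 1) → ℤ) : heatKernel (m + 1) t x y =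
    lineKernel t (y 0 - x 0) * heatKernel m t (Fin.tail x) (Fin.tail y) := by
  have hexp : Real.exp (-(2 * (m + 1 : ℕ)) * t) = Real.exp (-2 * t) * Real.exp (-(2 * m) * t) := by
    rw [← Real.exp_add]
    push_cast
    ring_nf
  simp only [heatKernel_eq_expGenFun, pathCount_dim_succ, lineKernel, hexp]
  rw [← expGenFun_mul (abs_lineCount_le · (y 0 - x 0))
    (abs_pathCount_le m · (Fin.tail x) (Fin.tail y)), mul_mul_mul_comm]

lemma heatKernel_eq_latticeKernel (m : ℕ) (t : ℝ) (x y : Fin m → ℤ) :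
    heatKernel m t x y = latticeKernel m t (y - x) := by
  induction m with
  | zero =>
    rw [heatKernel_eq_expGenFun, expGenFun, tsum_eq_single 0]
    · simp [latticeKernel, pathCount_zero, Subsingleton.elim x y]
    · intro n hn
      obtain ⟨n, rfl⟩ := Nat.exists_eq_succ_of_ne_zero hn
      simp [pathCount_succ]
  | succ m ih =>
    rw [heatKernel_dim_succ, ih, latticeKernel, latticeKernel, Fin.prod_univ_succ]
    rfl

lemma latticeKernel_cons (m : ℕ) (t : ℝ) (k : ℤ) (v : Fin m → ℤ) :
    latticeKernel (m + 1) t (Fin.cons k v) = lineKernel t k * latticeKernel m t v := by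
  simp [latticeKernel, Fin.prod_univ_succ]

variable {t : ℝ}

lemma lineKernel_nonneg (ht : 0 ≤ t) (k : ℤ) : 0 ≤ lineKernel t k :=
  mul_nonneg (Real.exp_pos _).le <| tsum_nonneg fun n ↦ by
    have := lineCount_nonneg n k
    positivity

lemma latticeKernel_nonneg {m : ℕ} (ht : 0 ≤ t) (v : Fin m → ℤ) : 0 ≤ latticeKernel m t v :=
  Finset.prod_nonneg fun _ _ ↦ lineKernel_nonneg ht _

lemma hasSum_lineKernel (ht : 0 ≤ t) : HasSum (lineKernel t) 1 := by
  let F : ℕ × ℤ → ℝ := fun p ↦ t ^ p.1 / p.1.factorial * lineCount p.1 p.2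
  have hF : 0 ≤ F := fun p ↦ mul_nonneg (by positivity) (lineCount_nonneg _ _)
  have hrow : ∀ n, HasSum (fun k ↦ F (n, k)) ((2 * t) ^ n / n.factorial) := fun n ↦ by
    rw [mul_comm 2 t, mul_pow, mul_div_right_comm]
    exact (hasSum_lineCount n).mul_left _
  have hrows : HasSum (fun n : ℕ ↦ (2 * t) ^ n / n.factorial) (Real.exp (2 * t)) := by
    rw [Real.exp_eq_exp_ℝ]
    exact NormedSpace.expSeries_div_hasSum_exp _
  have hsum : Summable F := (summable_prod_of_nonneg hF).2
    ⟨fun n ↦ (hrow n).summable, by simpa only [(hrow _).tsum_eq] using hrows.summable⟩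
  have hval : HasSum F (Real.exp (2 * t)) := by
    rw [← (hsum.hasSum.prod_fiberwise hrow).unique hrows]
    exact hsum.hasSum
  have hcol : ∀ k, HasSum (fun n ↦ F (n, k)) (expGenFun (lineCount · k) t) := fun k ↦
    (summable_norm_expGenFun (abs_lineCount_le · k) t).of_norm.hasSum
  have hswap : HasSum (fun k ↦ expGenFun (lineCount · k) t) (Real.exp (2 * t)) :=
    ((Equiv.prodComm ℤ ℕ).hasSum_iff.2 hval).prod_fiberwise hcol
  have hscale := hswap.mul_left (Real.exp (-2 * t))
  rwa [← Real.exp_add, neg_mul, neg_add_cancel, Real.exp_zero, ← neg_mul] at hscale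

lemma hasSum_latticeKernel (m : ℕ) (ht : 0 ≤ t) : HasSum (latticeKernel m t) 1 := by
  induction m with
  | zero => simpa [latticeKernel] using hasSum_unique (latticeKernel 0 t)
  | succ m ih =>
    rw [← (Fin.consEquiv fun _ : Fin (m + 1) ↦ ℤ).hasSum_iff]
    have hmul := (hasSum_lineKernel ht).mul ih ((hasSum_lineKernel ht).summable.mul_of_nonneg
      ih.summable (lineKernel_nonneg ht) (latticeKernel_nonneg ht))
    rw [mul_one] at hmul
    exact hmul.congr_fun fun p ↦ latticeKernel_cons m t p.1 p.2

lemma exp_neg_le_lineKernel_zero (ht : 0 ≤ t) : Real.exp (-2 * t) ≤ lineKernel t 0 := by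
  refine le_mul_of_one_le_right (Real.exp_pos _).le ?_
  refine le_trans ?_ ((summable_norm_expGenFun (abs_lineCount_le · 0) t).of_norm.le_tsum 0
    fun n _ ↦ mul_nonneg (by positivity) (lineCount_nonneg n 0))
  simp [lineCount]

lemma exp_neg_le_latticeKernel_zero (m : ℕ) (ht : 0 ≤ t) :
    Real.exp (-(2 * m * t)) ≤ latticeKernel m t 0 :=
  calc Real.exp (-(2 * m * t)) = ∏ _i : Fin m, Real.exp (-2 * t) := by
        rw [Finset.prod_const, ← Real.exp_nat_mul, Finset.card_univ, Fintype.card_fin]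
        ring_nf
    _ ≤ latticeKernel m t 0 := Finset.prod_le_prod (fun _ _ ↦ (Real.exp_pos _).le)
        fun _ _ ↦ exp_neg_le_lineKernel_zero ht

end HeatKernel

section FourierBounds

lemma integral_cos_int_mul (k : ℤ) :
    ∫ θ in (-Real.pi)..Real.pi, Real.cos (k * θ) = if k = 0 then 2 * Real.pi else 0 := by
  split_ifs with hk
  · simp [hk, two_mul]
  · rw [intervalIntegral.integral_comp_mul_left Real.cos (Int.cast_ne_zero.2 hk)]
    simp [Real.sin_int_mul_pi]

lemma two_pi_mul_lineCount (n : ℕ) (k : ℤ) : 2 * Real.pi * lineCount n k =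
    ∫ θ in (-Real.pi)..Real.pi, (2 * Real.cos θ) ^ n * Real.cos (k * θ) := by
  induction n generalizing k with
  | zero => simp [lineCount, integral_cos_int_mul]
  | succ n ih =>
    rw [lineCount, mul_add, ih, ih, ← intervalIntegral.integral_add
      (Continuous.intervalIntegrable (by fun_prop) _ _)
      (Continuous.intervalIntegrable (by fun_prop) _ _)]
    refine intervalIntegral.integral_congr fun θ _ ↦ ?_
    push_cast
    rw [sub_mul, add_mul, Real.cos_sub, Real.cos_add, one_mul]
    ring

lemma two_pi_mul_expGenFun_lineCount {t : ℝ} (ht : 0 ≤ t) (k : ℤ) :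
    2 * Real.pi * expGenFun (lineCount · k) t =
      ∫ θ in (-Real.pi)..Real.pi, Real.exp (2 * t * Real.cos θ) * Real.cos (k * θ) := by
  have hseries : ∀ θ, HasSum (fun n : ℕ ↦ t ^ n / n.factorial *
      ((2 * Real.cos θ) ^ n * Real.cos (k * θ)))
      (Real.exp (2 * t * Real.cos θ) * Real.cos (k * θ)) := fun θ ↦ by
    have hexp : HasSum (fun n : ℕ ↦ (2 * t * Real.cos θ) ^ n / n.factorial)
        (Real.exp (2 * t * Real.cos θ)) := by
      rw [Real.exp_eq_exp_ℝ]
      exact NormedSpace.expSeries_div_hasSum_exp _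
    exact (hexp.mul_right _).congr_fun fun n ↦ by simp only [mul_pow]; ring
  have hbound : ∀ (n : ℕ) (θ : ℝ), ‖t ^ n / n.factorial *
      ((2 * Real.cos θ) ^ n * Real.cos (k * θ))‖ ≤ (2 * t) ^ n / n.factorial := fun n θ ↦ by
    have hcos : |2 * Real.cos θ| ≤ 2 := by
      rw [abs_mul, abs_two]
      linarith [Real.abs_cos_le_one θ]
    calc ‖t ^ n / n.factorial * ((2 * Real.cos θ) ^ n * Real.cos (k * θ))‖
        = t ^ n / n.factorial * (|2 * Real.cos θ| ^ n * |Real.cos (k * θ)|) := by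
          rw [Real.norm_eq_abs, abs_mul, abs_mul, abs_pow, abs_of_nonneg (by positivity)]
      _ ≤ t ^ n / n.factorial * (2 ^ n * 1) := by
          gcongr
          exact Real.abs_cos_le_one _
      _ = (2 * t) ^ n / n.factorial := by rw [mul_pow]; ring
  have hint := intervalIntegral.hasSum_integral_of_dominated_convergence (μ := volume)
    (a := -Real.pi) (b := Real.pi) (fun n _ ↦ (2 * t) ^ n / n.factorial)
    (fun n ↦ Continuous.aestronglyMeasurable (by fun_prop))
    (fun n ↦ ae_of_all _ fun θ _ ↦ hbound n θ)
    (ae_of_all _ fun _ _ ↦ Real.summable_pow_div_factorial (2 * t)) (by simp)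
    (ae_of_all _ fun θ _ ↦ hseries θ)
  rw [← hint.tsum_eq, expGenFun, ← tsum_mul_left]
  refine tsum_congr fun n ↦ ?_
  rw [intervalIntegral.integral_const_mul, ← two_pi_mul_lineCount]
  ring

lemma two_pi_mul_lineKernel {t : ℝ} (ht : 0 ≤ t) (k : ℤ) : 2 * Real.pi * lineKernel t k =
    ∫ θ in (-Real.pi)..Real.pi, Real.exp (-2 * t * (1 - Real.cos θ)) * Real.cos (k * θ) := by
  rw [lineKernel, mul_left_comm, two_pi_mul_expGenFun_lineCount ht,
    ← intervalIntegral.integral_const_mul]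
  refine intervalIntegral.integral_congr fun θ _ ↦ ?_
  simp only [← mul_assoc, ← Real.exp_add]
  ring_nf

lemma integral_gaussian_symm_le {b c : ℝ} (hb : 0 < b) (hc : 0 ≤ c) :
    ∫ θ in (-c)..c, Real.exp (-b * θ ^ 2) ≤ √(Real.pi / b) := by
  rw [← integral_gaussian, intervalIntegral.integral_of_le (by linarith)]
  exact setIntegral_le_integral (integrable_exp_neg_mul_sq hb)
    (ae_of_all _ fun _ ↦ (Real.exp_pos _).le)

variable {t θ : ℝ}

lemma exp_one_sub_cos_le (ht : 0 ≤ t) (hθ : θ ∈ Icc (-Real.pi) Real.pi) :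
    Real.exp (-2 * t * (1 - Real.cos θ)) ≤ Real.exp (-(4 * t / Real.pi ^ 2) * θ ^ 2) := by
  have hcos := Real.cos_le_one_sub_mul_cos_sq (abs_le.2 hθ)
  rw [Real.exp_le_exp]
  calc -2 * t * (1 - Real.cos θ) ≤ -2 * t * (2 / Real.pi ^ 2 * θ ^ 2) :=
        mul_le_mul_of_nonpos_left (by linarith) (by linarith)
    _ = -(4 * t / Real.pi ^ 2) * θ ^ 2 := by ring

lemma pi_pow_three_lt : Real.pi ^ 3 < 32 := by
  calc Real.pi ^ 3 < 3.15 ^ 3 := by gcongr; exact Real.pi_lt_d2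
    _ < 32 := by norm_num

lemma lineKernel_le (ht : 0 < t) (k : ℤ) : lineKernel t k ≤ 1 / √t := by
  have hmono : 2 * Real.pi * lineKernel t k ≤
      ∫ θ in (-Real.pi)..Real.pi, Real.exp (-(4 * t / Real.pi ^ 2) * θ ^ 2) := by
    rw [two_pi_mul_lineKernel ht.le]
    refine intervalIntegral.integral_mono_on (by linarith [Real.pi_pos])
      (Continuous.intervalIntegrable (by fun_prop) _ _)
      (Continuous.intervalIntegrable (by fun_prop) _ _) fun θ hθ ↦ ?_
    exact (mul_le_of_le_one_right (Real.exp_pos _).le (Real.cos_le_one _)).trans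
      (exp_one_sub_cos_le ht.le hθ)
  have hgauss := integral_gaussian_symm_le (by positivity : 0 < 4 * t / Real.pi ^ 2)
    Real.pi_pos.le
  have hsqrt : √(Real.pi / (4 * t / Real.pi ^ 2)) ≤ 2 * Real.pi * (1 / √t) :=
    calc √(Real.pi / (4 * t / Real.pi ^ 2)) = √(Real.pi ^ 3 / 4) / √t := by
          rw [← Real.sqrt_div (by positivity)]
          congr 1
          field_simp
      _ ≤ 6 / √t := by
          gcongr
          rw [Real.sqrt_le_left (by norm_num)]
          linarith [pi_pow_three_lt]
      _ ≤ 2 * Real.pi * (1 / √t) := by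
          rw [mul_one_div]
          gcongr
          linarith [Real.pi_gt_three]
  exact le_of_mul_le_mul_left (hmono.trans (hgauss.trans hsqrt)) (by positivity)

lemma le_two_pi_mul_lineKernel_zero (ht : 1 ≤ t) :
    2 * Real.exp (-1) / √t ≤ 2 * Real.pi * lineKernel t 0 := by
  have ht₀ : 0 < t := by linarith
  have hr₀ : 0 < 1 / √t := by positivity
  have hrπ : 1 / √t ≤ Real.pi :=
    (div_le_one_of_le₀ (Real.one_le_sqrt.2 ht) (by positivity)).trans
      (by linarith [Real.pi_gt_three])
  have hpoint : ∀ θ ∈ Icc (-(1 / √t)) (1 / √t),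
      Real.exp (-1) ≤ Real.exp (-2 * t * (1 - Real.cos θ)) := fun θ hθ ↦ by
    have hsq : θ ^ 2 ≤ 1 / t := by
      simpa [div_pow, Real.sq_sqrt ht₀.le] using sq_le_sq' hθ.1 hθ.2
    have hcos : 1 - Real.cos θ ≤ 1 / t / 2 := by
      linarith [Real.one_sub_sq_div_two_le_cos (x := θ)]
    rw [Real.exp_le_exp]
    calc (-1 : ℝ) = -2 * t * (1 / t / 2) := by field_simp
      _ ≤ -2 * t * (1 - Real.cos θ) := mul_le_mul_of_nonpos_left hcos (by linarith)
  calc 2 * Real.exp (-1) / √t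
      = ∫ _ in (-(1 / √t))..(1 / √t), Real.exp (-1) := by
        rw [intervalIntegral.integral_const, smul_eq_mul]
        ring
    _ ≤ ∫ θ in (-(1 / √t))..(1 / √t), Real.exp (-2 * t * (1 - Real.cos θ)) :=
        intervalIntegral.integral_mono_on (by linarith) (by simp)
          (Continuous.intervalIntegrable (by fun_prop) _ _) hpoint
    _ ≤ ∫ θ in (-Real.pi)..Real.pi, Real.exp (-2 * t * (1 - Real.cos θ)) :=
        intervalIntegral.integral_mono_interval (by linarith) (by linarith) hrπ
          (ae_of_all _ fun _ ↦ (Real.exp_pos _).le)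
          (Continuous.intervalIntegrable (by fun_prop) _ _)
    _ = 2 * Real.pi * lineKernel t 0 := by simp [two_pi_mul_lineKernel ht₀.le]

lemma exp_mul_one_sub_cos_le (ht : 0 < t) (k : ℤ) (hθ : θ ∈ Icc (-Real.pi) Real.pi) :
    Real.exp (-2 * t * (1 - Real.cos θ)) * (1 - Real.cos (k * θ)) ≤
      Real.pi ^ 2 * k ^ 2 / (4 * t) * Real.exp (-(2 * t / Real.pi ^ 2) * θ ^ 2) := by
  set u := 2 * t / Real.pi ^ 2 * θ ^ 2 with hu
  -- This trades the factor `θ²` for half of the Gaussian exponent.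
  have hu_le : u ≤ Real.exp u := by linarith [Real.add_one_le_exp u]
  have hsplit : -(4 * t / Real.pi ^ 2) * θ ^ 2 = -u + -u := by rw [hu]; ring
  calc Real.exp (-2 * t * (1 - Real.cos θ)) * (1 - Real.cos (k * θ))
      ≤ Real.exp (-u + -u) * ((k * θ) ^ 2 / 2) := by
        rw [← hsplit]
        exact mul_le_mul (exp_one_sub_cos_le ht.le hθ)
          (by linarith [Real.one_sub_sq_div_two_le_cos (x := k * θ)])
          (by linarith [Real.cos_le_one (k * θ)]) (Real.exp_pos _).le
    _ = Real.pi ^ 2 * k ^ 2 / (4 * t) * (u * Real.exp (-u) * Real.exp (-u)) := by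
        rw [Real.exp_add, hu]
        field_simp
        ring
    _ ≤ Real.pi ^ 2 * k ^ 2 / (4 * t) * (Real.exp u * Real.exp (-u) * Real.exp (-u)) := by gcongr
    _ = Real.pi ^ 2 * k ^ 2 / (4 * t) * Real.exp (-(2 * t / Real.pi ^ 2) * θ ^ 2) := by
        rw [← Real.exp_add, add_neg_cancel, Real.exp_zero, one_mul, hu, neg_mul]

lemma two_pi_mul_lineKernel_zero_sub_le (ht : 0 < t) (k : ℤ) :
    2 * Real.pi * (lineKernel t 0 - lineKernel t k) ≤ 10 * k ^ 2 / t / √t := by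
  have hsqrt : √(Real.pi / (2 * t / Real.pi ^ 2)) ≤ 4 / √t :=
    calc √(Real.pi / (2 * t / Real.pi ^ 2)) = √(Real.pi ^ 3 / 2) / √t := by
          rw [← Real.sqrt_div (by positivity)]
          congr 1
          field_simp
      _ ≤ 4 / √t := by
          gcongr
          rw [Real.sqrt_le_left (by norm_num)]
          linarith [pi_pow_three_lt]
  have hπ : Real.pi ^ 2 ≤ 10 := by
    calc Real.pi ^ 2 ≤ 3.15 ^ 2 := by gcongr; exact Real.pi_lt_d2.le
      _ ≤ 10 := by norm_num
  calc 2 * Real.pi * (lineKernel t 0 - lineKernel t k)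
      = ∫ θ in (-Real.pi)..Real.pi,
          Real.exp (-2 * t * (1 - Real.cos θ)) * (1 - Real.cos (k * θ)) := by
        rw [mul_sub, two_pi_mul_lineKernel ht.le, two_pi_mul_lineKernel ht.le,
          ← intervalIntegral.integral_sub (Continuous.intervalIntegrable (by fun_prop) _ _)
            (Continuous.intervalIntegrable (by fun_prop) _ _)]
        simp [mul_sub]
    _ ≤ ∫ θ in (-Real.pi)..Real.pi,
          Real.pi ^ 2 * k ^ 2 / (4 * t) * Real.exp (-(2 * t / Real.pi ^ 2) * θ ^ 2) :=
        intervalIntegral.integral_mono_on (by linarith [Real.pi_pos])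
          (Continuous.intervalIntegrable (by fun_prop) _ _)
          (Continuous.intervalIntegrable (by fun_prop) _ _)
          fun θ hθ ↦ exp_mul_one_sub_cos_le ht k hθ
    _ ≤ 10 * k ^ 2 / (4 * t) * (4 / √t) := by
        rw [intervalIntegral.integral_const_mul]
        gcongr
        · exact intervalIntegral.integral_nonneg (by linarith [Real.pi_pos])
            fun _ _ ↦ (Real.exp_pos _).le
        · exact (integral_gaussian_symm_le (by positivity) Real.pi_pos.le).trans hsqrt
    _ = 10 * k ^ 2 / t / √t := by field_simp

lemma le_lineKernel (ht : 1 ≤ t) {k : ℤ} (hk : |(k : ℝ)| ≤ √t / 10) :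
    1 / (20 * √t) ≤ lineKernel t k := by
  have ht₀ : 0 < t := by linarith
  have hk_sq : (k : ℝ) ^ 2 / t ≤ 1 / 100 := by
    have hsq := pow_le_pow_left₀ (abs_nonneg _) hk 2
    rw [sq_abs, div_pow, Real.sq_sqrt ht₀.le] at hsq
    rw [div_le_iff₀ ht₀]
    linarith
  have hexp : (0.36 : ℝ) ≤ Real.exp (-1) := by linarith [Real.exp_neg_one_gt_d9]
  have hfourier : 0.6 / √t ≤ 2 * Real.pi * lineKernel t k :=
    calc 0.6 / √t ≤ (2 * Real.exp (-1) - 10 * (k ^ 2 / t)) / √t := by gcongr; linarith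
      _ = 2 * Real.exp (-1) / √t - 10 * k ^ 2 / t / √t := by ring
      _ ≤ 2 * Real.pi * lineKernel t k := by
          linarith [le_two_pi_mul_lineKernel_zero ht, two_pi_mul_lineKernel_zero_sub_le ht₀ k]
  refine le_of_mul_le_mul_left (le_trans ?_ hfourier) Real.two_pi_pos
  calc 2 * Real.pi * (1 / (20 * √t)) = Real.pi / 10 / √t := by field_simp; norm_num
    _ ≤ 0.6 / √t := by gcongr; linarith [Real.pi_lt_four]

lemma latticeKernel_le {m : ℕ} (ht : 0 < t) (v : Fin m → ℤ) :
    latticeKernel m t v ≤ (1 / √t) ^ m :=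
  calc latticeKernel m t v ≤ ∏ _i : Fin m, 1 / √t :=
      Finset.prod_le_prod (fun _ _ ↦ lineKernel_nonneg ht.le _) fun i _ ↦ lineKernel_le ht (v i)
    _ = (1 / √t) ^ m := by simp

lemma le_latticeKernel {m : ℕ} (ht : 1 ≤ t) {v : Fin m → ℤ} (hv : ∀ i, |(v i : ℝ)| ≤ √t / 10) :
    (1 / (20 * √t)) ^ m ≤ latticeKernel m t v :=
  calc (1 / (20 * √t)) ^ m = ∏ _i : Fin m, 1 / (20 * √t) := by simp
    _ ≤ latticeKernel m t v :=
      Finset.prod_le_prod (fun _ _ ↦ by positivity) fun i _ ↦ le_lineKernel ht (hv i)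

end FourierBounds

section MarkovChain

variable {α : Type*} {n : ℕ}

/-- The weight of the trajectory `y` under the time-inhomogeneous Markov chain with initial law `p`
and transition laws `κ`. -/
noncomputable def chainWeight (p : PMF α) (κ : Fin n → α → PMF α) (y : Fin (n + 1) → α) : ℝ≥0∞ :=
  p (y 0) * ∏ i, κ i (y i.castSucc) (y i.succ)

lemma chainWeight_snoc (p : PMF α) (κ : Fin (n + 1) → α → PMF α) (y : Fin (n + 1) → α) (a : α) :
    chainWeight p κ (Fin.snoc y a) =
      chainWeight p (fun i ↦ κ i.castSucc) y * κ (Fin.last n) (y (Fin.last n)) a := by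
  have hinit : ∀ i : Fin (n + 1), (Fin.snoc y a : Fin (n + 2) → α) i.castSucc = y i :=
    Fin.snoc_castSucc (α := fun _ ↦ α) a y
  have hlast : (Fin.snoc y a : Fin (n + 2) → α) (Fin.last (n + 1)) = a :=
    Fin.snoc_last (α := fun _ ↦ α) a y
  rw [chainWeight, chainWeight, Fin.prod_univ_castSucc, Fin.succ_last, hlast, hinit, ← mul_assoc]
  simp only [Fin.succ_castSucc, hinit, ← Fin.castSucc_zero]

lemma tsum_chainWeight (p : PMF α) (κ : Fin n → α → PMF α) : ∑' y, chainWeight p κ y = 1 := by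
  induction n with
  | zero =>
    rw [← p.tsum_coe, ← (Equiv.funUnique (Fin 1) α).tsum_eq]
    simp [chainWeight]
  | succ n ih =>
    calc ∑' y, chainWeight p κ y
        = ∑' z : α × (Fin (n + 1) → α), chainWeight p κ (Fin.snoc z.2 z.1) :=
          ((Fin.snocEquiv fun _ : Fin (n + 2) ↦ α).tsum_eq _).symm
      _ = ∑' (y : Fin (n + 1) → α) (a : α), chainWeight p κ (Fin.snoc y a) := by
          rw [ENNReal.tsum_prod (f := fun a (y : Fin (n + 1) → α) ↦ chainWeight p κ (Fin.snoc y a)),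
            ENNReal.tsum_comm]
      _ = 1 := by simp only [chainWeight_snoc, ENNReal.tsum_mul_left, PMF.tsum_coe, mul_one, ih]

/-- The law of the first `n + 1` states of the time-inhomogeneous Markov chain with initial law `p`
and transition laws `κ`. -/
noncomputable def chainPMF (p : PMF α) (κ : Fin n → α → PMF α) : PMF (Fin (n + 1) → α) :=
  ⟨chainWeight p κ, ENNReal.summable.hasSum_iff.2 (tsum_chainWeight p κ)⟩

lemma chainPMF_apply (p : PMF α) (κ : Fin n → α → PMF α) (y : Fin (n + 1) → α) :
    chainPMF p κ y = p (y 0) * ∏ i, κ i (y i.castSucc) (y i.succ) :=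
  rfl

end MarkovChain

section JointMass

variable {Ω α β : Type*} [MeasurableSpace Ω] [MeasurableSpace α] [MeasurableSpace β]
  [MeasurableSingletonClass α] [MeasurableSingletonClass β] {ν : Measure Ω}
  {X : Ω → α} {Y : Ω → β} {p : PMF α} {q : PMF β}

lemma measure_eq_of_joint_eq_mul [Countable β] (hX : Measurable X) (hY : Measurable Y)
    (h : ∀ a b, ν {ω | X ω = a ∧ Y ω = b} = p a * q b) (a : α) : ν {ω | X ω = a} = p a := by
  have hunion : {ω | X ω = a} = ⋃ b, {ω | X ω = a ∧ Y ω = b} := by ext; simp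
  rw [hunion, measure_iUnion]
  · simp only [h, ENNReal.tsum_mul_left, PMF.tsum_coe, mul_one]
  · exact fun b b' hb ↦ Set.disjoint_left.2 fun ω h h' ↦ hb (h.2.symm.trans h'.2)
  · exact fun b ↦ (hX (measurableSet_singleton a)).inter (hY (measurableSet_singleton b))

lemma indepFun_of_joint_eq_mul [Countable α] [Countable β] [IsFiniteMeasure ν]
    (hX : Measurable X) (hY : Measurable Y)
    (h : ∀ a b, ν {ω | X ω = a ∧ Y ω = b} = p a * q b) : IndepFun X Y ν := by
  rw [indepFun_iff_map_prod_eq_prod_map_map hX.aemeasurable hY.aemeasurable]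
  refine Measure.ext_of_singleton fun ⟨a, b⟩ ↦ ?_
  have hjoint : (fun ω ↦ (X ω, Y ω)) ⁻¹' {(a, b)} = {ω | X ω = a ∧ Y ω = b} := by ext; simp
  have ha := measure_eq_of_joint_eq_mul hX hY h a
  have hb := measure_eq_of_joint_eq_mul hY hX
    (fun b a ↦ by simpa only [and_comm, mul_comm] using h a b) b
  rw [← singleton_prod_singleton, Measure.prod_prod, singleton_prod_singleton,
    Measure.map_apply (hX.prodMk hY) (measurableSet_singleton _),
    Measure.map_apply hX (measurableSet_singleton _),
    Measure.map_apply hY (measurableSet_singleton _), hjoint, h]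
  exact (congrArg₂ (· * ·) ha hb).symm

end JointMass

section WalkLaw

/-- The law of a step with displacement probabilities `f` taken from `a`. -/
noncomputable def stepPMF {G : Type*} [AddGroup G] (f : G → ℝ) (hf : HasSum f 1)
    (hf₀ : ∀ v, 0 ≤ f v) (a : G) : PMF G :=
  ⟨fun b ↦ ENNReal.ofReal (f (b - a)), by
    rw [ENNReal.summable.hasSum_iff]
    refine ((Equiv.subRight a).tsum_eq fun v ↦ ENNReal.ofReal (f v)).trans ?_
    rw [← ENNReal.ofReal_tsum_of_nonneg hf₀ hf.summable, hf.tsum_eq, ENNReal.ofReal_one]⟩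

/-- The law at time `s` of the walk on `ℤ` started from `a` and jumping to each neighbour at
rate `1`. -/
noncomputable def linePMF (s : ℝ≥0) : ℤ → PMF ℤ :=
  stepPMF (lineKernel s) (hasSum_lineKernel s.coe_nonneg) (lineKernel_nonneg s.coe_nonneg)

/-- The law at time `s` of the walk on `ℤ^m` started from `a` and jumping to each neighbour at
rate `1`. -/
noncomputable def latticePMF (m : ℕ) (s : ℝ≥0) : (Fin m → ℤ) → PMF (Fin m → ℤ) :=
  stepPMF (latticeKernel m s) (hasSum_latticeKernel m s.coe_nonneg)
    (latticeKernel_nonneg s.coe_nonneg)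

lemma linePMF_apply (s : ℝ≥0) (a b : ℤ) : linePMF s a b = ENNReal.ofReal (lineKernel s (b - a)) :=
  rfl

lemma latticePMF_apply (m : ℕ) (s : ℝ≥0) (a b : Fin m → ℤ) :
    latticePMF m s a b = ENNReal.ofReal (latticeKernel m s (b - a)) :=
  rfl

lemma latticePMF_cons (m : ℕ) (s : ℝ≥0) (o : Fin (m + 1) → ℤ) (k : ℤ) (v : Fin m → ℤ) :
    latticePMF (m + 1) s o (Fin.cons k v) = linePMF s (o 0) k * latticePMF m s (Fin.tail o) v := by
  have hsub : (Fin.cons k v - o : Fin (m + 1) → ℤ) = Fin.cons (k - o 0) (v - Fin.tail o) := by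
    refine funext fun i ↦ Fin.cases ?_ (fun i ↦ ?_) i <;> rfl
  rw [latticePMF_apply, linePMF_apply, latticePMF_apply,
    ← ENNReal.ofReal_mul (lineKernel_nonneg s.coe_nonneg _), hsub, latticeKernel_cons]

/-- The law of the walk on `ℤ` from `a`, observed at the times `t`. -/
noncomputable def lineChainPMF {n : ℕ} (t : Fin (n + 1) → ℝ≥0) (a : ℤ) : PMF (Fin (n + 1) → ℤ) :=
  chainPMF (linePMF (t 0) a) fun i ↦ linePMF (t i.succ - t i.castSucc)

/-- The law of the walk on `ℤ^m` from `a`, observed at the times `t`. -/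
noncomputable def latticeChainPMF (m : ℕ) {n : ℕ} (t : Fin (n + 1) → ℝ≥0) (a : Fin m → ℤ) :
    PMF (Fin (n + 1) → Fin m → ℤ) :=
  chainPMF (latticePMF m (t 0) a) fun i ↦ latticePMF m (t i.succ - t i.castSucc)

lemma latticeChainPMF_cons (m : ℕ) {n : ℕ} (t : Fin (n + 1) → ℝ≥0) (o : Fin (m + 1) → ℤ)
    (a : Fin (n + 1) → ℤ) (b : Fin (n + 1) → Fin m → ℤ) :
    latticeChainPMF (m + 1) t o (fun i ↦ Fin.cons (a i) (b i)) =
      lineChainPMF t (o 0) a * latticeChainPMF m t (Fin.tail o) b := by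
  simp only [latticeChainPMF, lineChainPMF, chainPMF_apply, latticePMF_cons, Fin.cons_zero,
    Fin.tail_cons, Finset.prod_mul_distrib]
  exact mul_mul_mul_comm _ _ _ _

namespace IsCTSRW

variable {m n : ℕ} {Ω : Type*} [MeasurableSpace Ω] {P : (Fin m → ℤ) → Measure Ω}
  {S : ℝ → Ω → Fin m → ℤ}

lemma measurable_eval (hS : IsCTSRW m P S) (s : ℝ) : Measurable (S s) :=
  hS.meas.comp measurable_prodMk_left

lemma measure_forall_eq (hS : IsCTSRW m P S) (o : Fin m → ℤ) {t : Fin (n + 1) → ℝ≥0}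
    (ht : Monotone t) (y : Fin (n + 1) → Fin m → ℤ) :
    P o {ω | ∀ i, S (t i) ω = y i} = latticeChainPMF m t o y := by
  have := hS.prob o
  have hstep : ∀ i : Fin n, t i.castSucc ≤ t i.succ := fun i ↦ ht i.castSucc_le_succ
  rw [← ENNReal.ofReal_toReal (measure_ne_top (P o) _),
    hS.fdd o n (fun i ↦ t i) (t 0).coe_nonneg hstep y]
  simp only [heatKernel_eq_latticeKernel, latticeChainPMF, chainPMF_apply, latticePMF_apply,
    NNReal.coe_sub (hstep _)]
  rw [ENNReal.ofReal_mul (latticeKernel_nonneg (t 0).coe_nonneg _),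
    ENNReal.ofReal_prod_of_nonneg fun i _ ↦
      latticeKernel_nonneg (sub_nonneg.2 (NNReal.coe_le_coe.2 (hstep i))) _]

end IsCTSRW

end WalkLaw

section Components

variable {d : ℕ} {Ω : Type*} (S : ℝ → Ω → Fin (d + 1) → ℤ)

/-- The first, `ℤ`-valued, component `S¹` of a walk on `ℤ^{1+d}`. -/
def walkFst (u : ℝ≥0) (ω : Ω) : ℤ := S u ω 0

/-- The second, `ℤ^d`-valued, component `S²` of a walk on `ℤ^{1+d}`. -/
def walkSnd (u : ℝ≥0) (ω : Ω) : Fin d → ℤ := Fin.tail (S u ω)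

namespace IsCTSRW

variable {S} [MeasurableSpace Ω] {P : (Fin (d + 1) → ℤ) → Measure Ω}

lemma measurable_walkFst (hS : IsCTSRW (d + 1) P S) (u : ℝ≥0) : Measurable (walkFst S u) :=
  (measurable_pi_apply 0).comp (hS.measurable_eval u)

lemma measurable_walkSnd (hS : IsCTSRW (d + 1) P S) (u : ℝ≥0) : Measurable (walkSnd S u) :=
  measurable_pi_lambda _ fun i ↦ (measurable_pi_apply i.succ).comp (hS.measurable_eval u)

variable {n : ℕ} {t : Fin (n + 1) → ℝ≥0}

lemma measure_walkFst_walkSnd_eq (hS : IsCTSRW (d + 1) P S) (o : Fin (d + 1) → ℤ)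
    (ht : Monotone t) (a : Fin (n + 1) → ℤ) (b : Fin (n + 1) → Fin d → ℤ) :
    P o {ω | (fun i ↦ walkFst S (t i) ω) = a ∧ (fun i ↦ walkSnd S (t i) ω) = b} =
      lineChainPMF t (o 0) a * latticeChainPMF d t (Fin.tail o) b := by
  rw [← latticeChainPMF_cons, ← hS.measure_forall_eq o ht]
  congr 1 with ω
  rw [mem_ofPred_eq, mem_ofPred_eq, funext_iff, funext_iff, ← forall_and]
  refine forall_congr' fun i ↦ ?_
  rw [eq_iff_zero_and_tail (S (t i) ω), Fin.cons_zero, Fin.tail_cons]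
  rfl

lemma measure_walkSnd_chain_eq (hS : IsCTSRW (d + 1) P S) (o : Fin (d + 1) → ℤ)
    (ht : Monotone t) (b : Fin (n + 1) → Fin d → ℤ) :
    P o {ω | (fun i ↦ walkSnd S (t i) ω) = b} = latticeChainPMF d t (Fin.tail o) b :=
  measure_eq_of_joint_eq_mul (measurable_pi_lambda _ fun i ↦ hS.measurable_walkSnd (t i))
    (measurable_pi_lambda _ fun i ↦ hS.measurable_walkFst (t i))
    (fun b a ↦ by simpa only [and_comm, mul_comm] using hS.measure_walkFst_walkSnd_eq o ht a b) b

lemma indepFun_walkFst_walkSnd_chain (hS : IsCTSRW (d + 1) P S) (o : Fin (d + 1) → ℤ)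
    (ht : Monotone t) :
    IndepFun (fun ω i ↦ walkFst S (t i) ω) (fun ω i ↦ walkSnd S (t i) ω) (P o) :=
  have := hS.prob o
  indepFun_of_joint_eq_mul (measurable_pi_lambda _ fun i ↦ hS.measurable_walkFst (t i))
    (measurable_pi_lambda _ fun i ↦ hS.measurable_walkSnd (t i))
    (hS.measure_walkFst_walkSnd_eq o ht)

lemma measure_walkFst_eq (hS : IsCTSRW (d + 1) P S) (o : Fin (d + 1) → ℤ) (s : ℝ≥0) (k : ℤ) :
    P o {ω | walkFst S s ω = k} = linePMF s (o 0) k := by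
  have hchain := measure_eq_of_joint_eq_mul
    (measurable_pi_lambda _ fun _ : Fin 1 ↦ hS.measurable_walkFst s)
    (measurable_pi_lambda _ fun _ ↦ hS.measurable_walkSnd s)
    (hS.measure_walkFst_walkSnd_eq o (t := fun _ ↦ s) monotone_const) fun _ ↦ k
  simpa [funext_iff, lineChainPMF, chainPMF_apply] using hchain

lemma measure_walkSnd_eq (hS : IsCTSRW (d + 1) P S) (o : Fin (d + 1) → ℤ) (s : ℝ≥0)
    (x : Fin d → ℤ) : P o {ω | walkSnd S s ω = x} = latticePMF d s (Fin.tail o) x := by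
  have hchain := hS.measure_walkSnd_chain_eq o (n := 0) (t := fun _ ↦ s) monotone_const fun _ ↦ x
  simpa only [funext_iff (α := Fin 1), Fin.forall_fin_one, latticeChainPMF, chainPMF_apply,
    Finset.univ_eq_empty, Finset.prod_empty, mul_one] using hchain

lemma indepFun_walkFst_walkSnd (hS : IsCTSRW (d + 1) P S) (o : Fin (d + 1) → ℤ) :
    IndepFun (fun ω u ↦ walkFst S u ω) (fun ω u ↦ walkSnd S u ω) (P o) := by
  classical
  have := hS.prob o
  refine IndepFun.process_indepFun_process hS.measurable_walkFst hS.measurable_walkSnd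
    fun I J ↦ ?_
  set K := insert 0 (I ∪ J) with hK
  have hI : ∀ i : I, (i : ℝ≥0) ∈ K := fun i ↦ by simp [hK]
  have hJ : ∀ j : J, (j : ℝ≥0) ∈ K := fun j ↦ by simp [hK]
  let e := K.orderIsoOfFin
    (Nat.succ_pred_eq_of_pos (Finset.card_pos.2 ⟨0, Finset.mem_insert_self _ _⟩)).symm
  have hchain := hS.indepFun_walkFst_walkSnd_chain o (t := fun i ↦ (e i : ℝ≥0))
    fun i j hij ↦ e.monotone hij
  have hcomp := hchain.comp
    (φ := fun (v : Fin (K.card.pred + 1) → ℤ) (i : I) ↦ v (e.symm ⟨i, hI i⟩))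
    (ψ := fun (v : Fin (K.card.pred + 1) → Fin d → ℤ) (j : J) ↦ v (e.symm ⟨j, hJ j⟩))
    (measurable_pi_lambda _ fun _ ↦ measurable_pi_apply _)
    (measurable_pi_lambda _ fun _ ↦ measurable_pi_apply _)
  simpa only [Function.comp_def, OrderIso.apply_symm_apply] using hcomp

end IsCTSRW

end Components

section RightLocallyConstant

variable {E : Type*}

/-- A path which stays constant for some time after every instant: the regularity of the paths of a
continuous-time walk on a discrete space. -/
def RightLocallyConstant (p : ℝ≥0 → E) : Prop := ∀ t, ∀ᶠ u in 𝓝[≥] t, p u = p t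

/-- The least multiple of `2⁻ⁿ` which is at least `u`. -/
noncomputable def dyadicCeil (n : ℕ) (u : ℝ≥0) : ℝ≥0 := ⌈2 ^ n * u⌉₊ / 2 ^ n

lemma le_dyadicCeil (n : ℕ) (u : ℝ≥0) : u ≤ dyadicCeil n u := by
  rw [dyadicCeil, le_div_iff₀ (by positivity), mul_comm]
  exact Nat.le_ceil _

lemma dyadicCeil_le (n : ℕ) (u : ℝ≥0) : dyadicCeil n u ≤ u + (1 / 2) ^ n := by
  rw [dyadicCeil, div_le_iff₀ (by positivity), add_mul, ← mul_pow, one_div,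
    inv_mul_cancel₀ two_ne_zero, one_pow, mul_comm u]
  exact (Nat.ceil_lt_add_one (by positivity)).le

lemma tendsto_dyadicCeil (u : ℝ≥0) : Tendsto (dyadicCeil · u) atTop (𝓝[≥] u) := by
  refine tendsto_nhdsWithin_iff.2 ⟨?_, .of_forall fun n ↦ le_dyadicCeil n u⟩
  refine tendsto_of_tendsto_of_tendsto_of_le_of_le tendsto_const_nhds ?_
    (fun n ↦ le_dyadicCeil n u) fun n ↦ dyadicCeil_le n u
  simpa using (tendsto_const_nhds (x := u)).add
    (NNReal.tendsto_pow_atTop_nhds_zero_of_lt_one (r := 1 / 2) one_half_lt_one)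

lemma RightLocallyConstant.eventually_dyadicCeil_eq {p : ℝ≥0 → E} (hp : RightLocallyConstant p)
    (u : ℝ≥0) : ∀ᶠ n in atTop, p (dyadicCeil n u) = p u :=
  (tendsto_dyadicCeil u).eventually (hp u)

lemma measurable_dyadicCeil (n : ℕ) : Measurable (dyadicCeil n) :=
  (measurable_from_nat.comp (Nat.measurable_ceil.comp (measurable_const_mul _))).div_const _

lemma countable_range_dyadicCeil (n : ℕ) : (range (dyadicCeil n)).Countable :=
  (countable_range fun k : ℕ ↦ (k / 2 ^ n : ℝ≥0)).mono <|
    range_subset_iff.2 fun u ↦ mem_range.2 ⟨⌈2 ^ n * u⌉₊, rfl⟩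

lemma measurable_eval_dyadicCeil [MeasurableSpace E] (n : ℕ) :
    Measurable fun q : (ℝ≥0 → E) × ℝ≥0 ↦ q.1 (dyadicCeil n q.2) := by
  have heval : Measurable fun q : (ℝ≥0 → E) × ℕ ↦ q.1 (q.2 / 2 ^ n) :=
    measurable_from_prod_countable_left fun k ↦ measurable_pi_apply (k / 2 ^ n : ℝ≥0)
  exact heval.comp (measurable_fst.prodMk
    (Nat.measurable_ceil.comp (measurable_snd.const_mul _)))

end RightLocallyConstant

section RandomTime

variable {Ω : Type*} [MeasurableSpace Ω] {ν : Measure Ω}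

lemma measure_le_of_ae_eventually_mem {A : Set Ω} {B : ℕ → Set Ω} {c : ℝ≥0∞}
    (hA : ∀ᵐ ω ∂ν, ω ∈ A → ∀ᶠ n in atTop, ω ∈ B n) (hB : ∀ n, ν (B n) ≤ c) : ν A ≤ c := by
  have hmono : Monotone fun N ↦ ⋂ n ≥ N, B n := fun N N' hN ↦
    biInter_subset_biInter_left fun _ hn ↦ le_trans hN hn
  calc ν A ≤ ν (⋃ N, ⋂ n ≥ N, B n) := measure_mono_ae <| hA.mono fun ω hω hωA ↦
        have ⟨N, hN⟩ := eventually_atTop.1 (hω hωA)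
        mem_iUnion.2 ⟨N, mem_iInter₂.2 hN⟩
    _ = ⨆ N, ν (⋂ n ≥ N, B n) := hmono.measure_iUnion
    _ ≤ c := iSup_le fun N ↦ (measure_mono (biInter_subset_of_mem (mem_Ici.2 le_rfl))).trans (hB N)

variable {E β : Type*} [MeasurableSpace E] [MeasurableSpace β] {U : ℝ≥0 → Ω → E} {Y : Ω → β}
  {τ : β → ℝ≥0} {A : Set E} {D : Set β} {a : ℝ≥0} {q : ℝ≥0∞}

lemma measure_countable_independent_time_le (hY : Measurable Y)
    (hind : ∀ s, IndepFun (U s) Y ν) (hτ : Measurable τ) (hτ_range : (range τ).Countable)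
    (hA : MeasurableSet A) (hD : MeasurableSet D) (haτ : ∀ y ∈ D, a ≤ τ y)
    (hq : ∀ s, a ≤ s → ν (U s ⁻¹' A) ≤ q) :
    ν {ω | U (τ (Y ω)) ω ∈ A ∧ Y ω ∈ D} ≤ q * ν (Y ⁻¹' D) := by
  have := hτ_range.to_subtype
  let L : range τ → Set β := fun s ↦ D ∩ τ ⁻¹' {s.1}
  have hL : ∀ s, MeasurableSet (L s) := fun s ↦ hD.inter (hτ (measurableSet_singleton _))
  have hL_disj : Pairwise (Function.onFun Disjoint fun s ↦ Y ⁻¹' L s) := fun s s' hs ↦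
    Disjoint.preimage _ <| Set.disjoint_left.2 fun y hy hy' ↦
      hs (Subtype.ext (hy.2.symm.trans hy'.2))
  have hlevel : ∀ s : range τ, ν (U s ⁻¹' A ∩ Y ⁻¹' L s) ≤ q * ν (Y ⁻¹' L s) := fun s ↦ by
    rcases (L s).eq_empty_or_nonempty with hempty | ⟨y, hyD, hys⟩
    · simp [hempty]
    · rw [(hind s).measure_inter_preimage_eq_mul _ _ hA (hL s)]
      gcongr
      exact hq s (hys ▸ haτ y hyD)
  calc ν {ω | U (τ (Y ω)) ω ∈ A ∧ Y ω ∈ D} ≤ ν (⋃ s : range τ, U s ⁻¹' A ∩ Y ⁻¹' L s) :=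
        measure_mono fun ω hω ↦ mem_iUnion.2 ⟨⟨τ (Y ω), mem_range_self _⟩, hω.1, hω.2, rfl⟩
    _ ≤ ∑' s : range τ, q * ν (Y ⁻¹' L s) :=
        (measure_iUnion_le _).trans (ENNReal.tsum_le_tsum hlevel)
    _ = q * ν (⋃ s : range τ, Y ⁻¹' L s) := by
        rw [ENNReal.tsum_mul_left, measure_iUnion hL_disj fun s ↦ hY (hL s)]
    _ ≤ q * ν (Y ⁻¹' D) := by
        gcongr
        exact iUnion_subset fun s ↦ preimage_mono inter_subset_left

lemma measure_independent_time_le (hU : ∀ᵐ ω ∂ν, RightLocallyConstant (U · ω))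
    (hY : Measurable Y) (hind : ∀ s, IndepFun (U s) Y ν) (hτ : Measurable τ)
    (hA : MeasurableSet A) (hD : MeasurableSet D) (haτ : ∀ y ∈ D, a ≤ τ y)
    (hq : ∀ s, a ≤ s → ν (U s ⁻¹' A) ≤ q) :
    ν {ω | U (τ (Y ω)) ω ∈ A ∧ Y ω ∈ D} ≤ q * ν (Y ⁻¹' D) := by
  refine measure_le_of_ae_eventually_mem
    (B := fun n ↦ {ω | U (dyadicCeil n (τ (Y ω))) ω ∈ A ∧ Y ω ∈ D})
    (hU.mono fun ω hω hωA ↦ (hω.eventually_dyadicCeil_eq (τ (Y ω))).mono fun n hn ↦ ?_) fun n ↦ ?_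
  · rw [mem_ofPred_eq, hn]
    exact hωA
  · exact measure_countable_independent_time_le hY hind ((measurable_dyadicCeil n).comp hτ)
      ((countable_range_dyadicCeil n).mono (range_comp_subset_range _ _)) hA hD
      (fun y hy ↦ (haτ y hy).trans (le_dyadicCeil n _)) hq

end RandomTime

section PathClock

variable {E : Type*} {w : E → ℝ≥0} {t : ℝ≥0}

/-- The clock `∫₀ᵗ w(p(u)) du` of a path `p` in the landscape `w`. The integrand is read off along
dyadic times, so that the clock is a measurable function of `p` for the product σ-algebra; for
right locally constant paths this changes nothing. An infinite integral gets the value `0`, as it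
does for the Bochner integral. -/
noncomputable def pathClock (w : E → ℝ≥0) (t : ℝ≥0) (p : ℝ≥0 → E) : ℝ≥0 :=
  (∫⁻ u in Ioc (0 : ℝ) t,
    liminf (fun n ↦ (w (p (dyadicCeil n u.toNNReal)) : ℝ≥0∞)) atTop).toNNReal

lemma measurable_pathClock [MeasurableSpace E] (hw : Measurable w) (t : ℝ≥0) :
    Measurable (pathClock w t) := by
  refine (Measurable.lintegral_prod_right' (f := fun q : (ℝ≥0 → E) × ℝ ↦
    liminf (fun n ↦ (w (q.1 (dyadicCeil n q.2.toNNReal)) : ℝ≥0∞)) atTop) ?_).ennreal_toNNReal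
  refine Measurable.liminf fun n ↦ measurable_coe_nnreal_ennreal.comp (hw.comp ?_)
  exact (measurable_eval_dyadicCeil n).comp
    (measurable_fst.prodMk (measurable_real_toNNReal.comp measurable_snd))

lemma RightLocallyConstant.pathClock_eq {p : ℝ≥0 → E} (hp : RightLocallyConstant p)
    (w : E → ℝ≥0) (t : ℝ≥0) :
    pathClock w t p = (∫⁻ u in Ioc (0 : ℝ) t, (w (p u.toNNReal) : ℝ≥0∞)).toNNReal := by
  rw [pathClock]
  congr 2 with u
  exact (tendsto_const_nhds.congr' <| (hp.eventually_dyadicCeil_eq u.toNNReal).mono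
    fun n hn ↦ by rw [hn]).liminf_eq

lemma RightLocallyConstant.mul_le_pathClock {p : ℝ≥0 → E} (hp : RightLocallyConstant p)
    {s δ : ℝ≥0} {x : E} (hx : ∀ u ∈ Ico s (s + δ), p u = x) (hclock : pathClock w (s + δ) p ≠ 0) :
    w x * δ ≤ pathClock w (s + δ) p := by
  rw [hp.pathClock_eq] at hclock ⊢
  rw [Ne, ENNReal.toNNReal_eq_zero_iff, not_or] at hclock
  rw [← ENNReal.coe_le_coe, ENNReal.coe_toNNReal hclock.2]
  have hsub : Ioo (s : ℝ) (s + δ) ⊆ Ioc (0 : ℝ) (s + δ : ℝ≥0) := fun u hu ↦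
    ⟨s.coe_nonneg.trans_lt hu.1, by simpa using hu.2.le⟩
  calc ((w x * δ : ℝ≥0) : ℝ≥0∞) = ∫⁻ _ in Ioo (s : ℝ) (s + δ), w x := by simp
    _ = ∫⁻ u in Ioo (s : ℝ) (s + δ), w (p u.toNNReal) :=
        setLIntegral_congr_fun measurableSet_Ioo fun u hu ↦ by
          rw [hx u.toNNReal ⟨NNReal.le_toNNReal_of_coe_le hu.1.le,
            (Real.toNNReal_lt_iff_lt_coe (s.coe_nonneg.trans hu.1.le)).2 (by simpa using hu.2)⟩]
    _ ≤ ∫⁻ u in Ioc (0 : ℝ) (s + δ : ℝ≥0), w (p u.toNNReal) := lintegral_mono_set hsub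

end PathClock

section Holding

variable {E : Type*} {s δ : ℝ≥0} {x : E}

/-- The points dividing `[s, s + δ]` into `2ⁿ` intervals of equal length. -/
noncomputable def dyadicGrid (s δ : ℝ≥0) (n : ℕ) (i : Fin (2 ^ n + 1)) : ℝ≥0 :=
  s + δ * (i / 2 ^ n)

/-- The paths which hold at `x` during `[s, s + δ]`, as witnessed by the dyadic subdivisions of this
interval. -/
def holdSet (s δ : ℝ≥0) (x : E) : Set (ℝ≥0 → E) := {p | ∀ n i, p (dyadicGrid s δ n i) = x}

lemma measurableSet_holdSet [MeasurableSpace E] [MeasurableSingletonClass E] (s δ : ℝ≥0) (x : E) :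
    MeasurableSet (holdSet s δ x) := by
  have hset : holdSet s δ x = ⋂ n, ⋂ i, (fun p ↦ p (dyadicGrid s δ n i)) ⁻¹' {x} := by
    ext p
    simp only [holdSet, mem_iInter, mem_preimage, mem_singleton_iff, mem_ofPred_eq]
  rw [hset]
  exact .iInter fun n ↦ .iInter fun i ↦ measurable_pi_apply _ (measurableSet_singleton x)

lemma dyadicGrid_zero (s δ : ℝ≥0) (n : ℕ) : dyadicGrid s δ n 0 = s := by simp [dyadicGrid]

lemma monotone_dyadicGrid (s δ : ℝ≥0) (n : ℕ) : Monotone (dyadicGrid s δ n) := fun i j hij ↦ by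
  unfold dyadicGrid
  gcongr
  exact hij

lemma dyadicGrid_succ_sub_castSucc (s δ : ℝ≥0) (n : ℕ) (i : Fin (2 ^ n)) :
    dyadicGrid s δ n i.succ - dyadicGrid s δ n i.castSucc = δ / 2 ^ n := by
  refine tsub_eq_of_eq_add ?_
  simp only [dyadicGrid, Fin.val_succ, Fin.val_castSucc]
  push_cast
  ring

lemma exists_dyadicGrid_succ_eq (s δ : ℝ≥0) (n : ℕ) (i : Fin (2 ^ n + 1)) :
    ∃ j, dyadicGrid s δ (n + 1) j = dyadicGrid s δ n i := by
  refine ⟨⟨2 * i, by have := i.2; rw [pow_succ]; omega⟩, ?_⟩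
  simp only [dyadicGrid, pow_succ, Nat.cast_mul, Nat.cast_ofNat]
  rw [mul_comm (2 ^ n : ℝ≥0), mul_div_mul_left _ _ two_ne_zero]

lemma RightLocallyConstant.comp_add_mul {p : ℝ≥0 → E} (hp : RightLocallyConstant p) (s δ : ℝ≥0) :
    RightLocallyConstant fun v ↦ p (s + δ * v) := fun v ↦ by
  have hcont : Tendsto (fun v ↦ s + δ * v) (𝓝[≥] v) (𝓝[≥] (s + δ * v)) :=
    tendsto_nhdsWithin_iff.2 ⟨Tendsto.mono_left (Continuous.tendsto (by fun_prop) v)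
      nhdsWithin_le_nhds, eventually_mem_nhdsWithin.mono fun _ hv ↦
        mem_Ici.2 (add_le_add le_rfl (mul_le_mul' le_rfl hv))⟩
  exact hcont.eventually (hp _)

lemma RightLocallyConstant.eq_of_mem_holdSet {p : ℝ≥0 → E} (hp : RightLocallyConstant p)
    (hhold : p ∈ holdSet s δ x) {u : ℝ≥0} (hu : u ∈ Ico s (s + δ)) : p u = x := by
  obtain ⟨v, rfl⟩ := exists_add_of_le hu.1
  have hvδ : v < δ := lt_of_add_lt_add_left hu.2
  have hδ : δ ≠ 0 := (zero_le.trans_lt hvδ).ne'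
  obtain ⟨n, hn⟩ := ((hp.comp_add_mul s δ).eventually_dyadicCeil_eq (v / δ)).exists
  rw [mul_div_cancel₀ _ hδ] at hn
  have hceil : ⌈2 ^ n * (v / δ)⌉₊ < 2 ^ n + 1 := Nat.lt_succ_of_le <| Nat.ceil_le.2 <| by
    push_cast
    exact mul_le_of_le_one_right' (div_le_one_of_le₀ hvδ.le zero_le)
  exact hn.symm.trans (hhold n ⟨_, hceil⟩)

end Holding

section HoldingProbability

variable {d : ℕ} {Ω : Type*} [MeasurableSpace Ω] {P : (Fin (d + 1) → ℤ) → Measure Ω}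
  {S : ℝ → Ω → Fin (d + 1) → ℤ}

lemma le_latticePMF_self (m : ℕ) (s : ℝ≥0) (x : Fin m → ℤ) :
    ENNReal.ofReal (Real.exp (-(2 * m * s))) ≤ latticePMF m s x x := by
  rw [latticePMF_apply, sub_self]
  exact ENNReal.ofReal_le_ofReal (exp_neg_le_latticeKernel_zero m s.coe_nonneg)

lemma one_le_ofReal_exp_neg_add (r : ℝ≥0) :
    1 ≤ ENNReal.ofReal (Real.exp (-r)) + r := by
  rw [← ENNReal.ofReal_coe_nnreal, ← ENNReal.ofReal_add (Real.exp_nonneg _) r.coe_nonneg,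
    ENNReal.one_le_ofReal]
  linarith [Real.add_one_le_exp (-r : ℝ)]

lemma tsum_latticePMF_left (m : ℕ) (s : ℝ≥0) (x : Fin m → ℤ) : ∑' y, latticePMF m s y x = 1 := by
  rw [← (latticePMF m s 0).tsum_coe, ← (Equiv.subLeft x).tsum_eq]
  simp only [latticePMF_apply, Equiv.subLeft_apply, sub_zero, sub_sub_cancel]

lemma tsum_ite_latticePMF_le (m : ℕ) (s : ℝ≥0) (x : Fin m → ℤ) :
    ∑' y, (if y = x then 0 else latticePMF m s y x) ≤ (2 * m * s : ℝ≥0) := by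
  have hsum : 1 = latticePMF m s x x + ∑' y, if y = x then 0 else latticePMF m s y x := by
    rw [← tsum_latticePMF_left m s x]
    convert ENNReal.tsum_eq_add_tsum_ite x
  have hself := le_latticePMF_self m s x
  refine (ENNReal.add_le_add_iff_left (PMF.apply_ne_top _ x)).1 (hsum.symm.trans_le ?_)
  exact (one_le_ofReal_exp_neg_add (2 * m * s)).trans (by push_cast; gcongr)

namespace IsCTSRW

lemma le_measure_holdSet (hS : IsCTSRW (d + 1) P S) (o : Fin (d + 1) → ℤ) (s δ : ℝ≥0)
    (x : Fin d → ℤ) :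
    latticePMF d s (Fin.tail o) x * ENNReal.ofReal (Real.exp (-(2 * d * δ))) ≤
      P o ((fun ω u ↦ walkSnd S u ω) ⁻¹' holdSet s δ x) := by
  have := hS.prob o
  let B : ℕ → Set Ω := fun n ↦ {ω | (fun i ↦ walkSnd S (dyadicGrid s δ n i) ω) = fun _ ↦ x}
  have hB_meas : ∀ n, MeasurableSet (B n) := fun n ↦
    measurable_pi_lambda _ (fun i ↦ hS.measurable_walkSnd _) (measurableSet_singleton _)
  have hB_anti : Antitone B := antitone_nat_of_succ_le fun n ω hω ↦ funext fun i ↦ by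
    obtain ⟨j, hj⟩ := exists_dyadicGrid_succ_eq s δ n i
    exact hj ▸ congrFun hω j
  have hB_iInter : (fun ω u ↦ walkSnd S u ω) ⁻¹' holdSet s δ x = ⋂ n, B n := by
    ext ω
    simp only [B, holdSet, mem_preimage, mem_iInter, mem_ofPred_eq, funext_iff]
  rw [hB_iInter, hB_anti.measure_iInter (fun n ↦ (hB_meas n).nullMeasurableSet)
    ⟨0, measure_ne_top _ _⟩]
  refine le_iInf fun n ↦ ?_
  rw [hS.measure_walkSnd_chain_eq o (monotone_dyadicGrid s δ n), latticeChainPMF, chainPMF_apply,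
    dyadicGrid_zero]
  gcongr
  calc ENNReal.ofReal (Real.exp (-(2 * d * δ)))
      = ENNReal.ofReal (Real.exp (-(2 * d * (δ / 2 ^ n : ℝ≥0)))) ^ 2 ^ n := by
        rw [← ENNReal.ofReal_pow (Real.exp_nonneg _), ← Real.exp_nat_mul]
        congr 2
        push_cast
        field_simp
    _ ≤ latticePMF d (δ / 2 ^ n) x x ^ 2 ^ n := by
        gcongr
        exact le_latticePMF_self d _ x
    _ = _ := by simp [dyadicGrid_succ_sub_castSucc]

variable {s : ℝ≥0} {o : Fin (d + 1) → ℤ} {M : ℝ≥0}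

lemma measure_walkSnd_eq_diff_holdSet_le (hS : IsCTSRW (d + 1) P S)
    (hM : ∀ y, latticePMF d s (Fin.tail o) y ≤ M) (δ : ℝ≥0) (x : Fin d → ℤ) :
    P o ({ω | walkSnd S s ω = x} \ (fun ω u ↦ walkSnd S u ω) ⁻¹' holdSet s δ x) ≤
      (M * (2 * d * δ) : ℝ≥0) := by
  have := hS.prob o
  have hsub : (fun ω u ↦ walkSnd S u ω) ⁻¹' holdSet s δ x ⊆ {ω | walkSnd S s ω = x} :=
    fun ω hω ↦ dyadicGrid_zero s δ 0 ▸ hω 0 0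
  rw [measure_sdiff hsub (measurable_pi_lambda _ hS.measurable_walkSnd
    (measurableSet_holdSet s δ x)).nullMeasurableSet (measure_ne_top _ _), hS.measure_walkSnd_eq,
    tsub_le_iff_left]
  calc latticePMF d s (Fin.tail o) x
      ≤ latticePMF d s (Fin.tail o) x *
          (ENNReal.ofReal (Real.exp (-(2 * d * δ : ℝ≥0))) + (2 * d * δ : ℝ≥0)) :=
        le_mul_of_one_le_right' (one_le_ofReal_exp_neg_add _)
    _ ≤ P o ((fun ω u ↦ walkSnd S u ω) ⁻¹' holdSet s δ x) + (M * (2 * d * δ) : ℝ≥0) := by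
        rw [mul_add, ENNReal.coe_mul M]
        gcongr
        · exact_mod_cast hS.le_measure_holdSet o s δ x
        · exact hM x

lemma measure_walkSnd_ne_and_eq_le (hS : IsCTSRW (d + 1) P S)
    (hM : ∀ y, latticePMF d s (Fin.tail o) y ≤ M) (δ : ℝ≥0) (x : Fin d → ℤ) :
    P o {ω | walkSnd S s ω ≠ x ∧ walkSnd S (s + δ) ω = x} ≤ (M * (2 * d * δ) : ℝ≥0) := by
  have hmono : Monotone ![s, s + δ] := by
    rw [Fin.monotone_iff_le_succ]
    simp
  have hpair : ∀ y, P o {ω | walkSnd S s ω = y ∧ walkSnd S (s + δ) ω = x} =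
      latticePMF d s (Fin.tail o) y * latticePMF d δ y x := fun y ↦ by
    simpa [funext_iff (α := Fin 2), Fin.forall_fin_two, latticeChainPMF, chainPMF_apply] using
      hS.measure_walkSnd_chain_eq o hmono ![y, x]
  calc P o {ω | walkSnd S s ω ≠ x ∧ walkSnd S (s + δ) ω = x}
      ≤ P o (⋃ y, ⋃ (_ : y ≠ x), {ω | walkSnd S s ω = y ∧ walkSnd S (s + δ) ω = x}) :=
        measure_mono fun ω hω ↦ mem_iUnion₂.2 ⟨_, hω.1, rfl, hω.2⟩
    _ ≤ ∑' y, M * (if y = x then 0 else latticePMF d δ y x) := by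
        refine (measure_iUnion_le _).trans (ENNReal.tsum_le_tsum fun y ↦ ?_)
        split_ifs with hy
        · simp [hy]
        · simp only [ne_eq, hy, not_false_eq_true, iUnion_true, hpair]
          gcongr
          exact hM y
    _ ≤ (M * (2 * d * δ) : ℝ≥0) := by
        rw [ENNReal.tsum_mul_left, ENNReal.coe_mul]
        gcongr
        exact tsum_ite_latticePMF_le d δ x

lemma measure_walkSnd_add_eq_diff_holdSet_le (hS : IsCTSRW (d + 1) P S)
    (hM : ∀ y, latticePMF d s (Fin.tail o) y ≤ M) (δ : ℝ≥0) (x : Fin d → ℤ) :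
    P o ({ω | walkSnd S (s + δ) ω = x} \ (fun ω u ↦ walkSnd S u ω) ⁻¹' holdSet s δ x) ≤
      (4 * d * M * δ : ℝ≥0) :=
  calc _ ≤ P o ({ω | walkSnd S s ω = x} \ (fun ω u ↦ walkSnd S u ω) ⁻¹' holdSet s δ x) +
          P o {ω | walkSnd S s ω ≠ x ∧ walkSnd S (s + δ) ω = x} :=
        (measure_mono fun ω hω ↦ (eq_or_ne (walkSnd S s ω) x).imp (⟨·, hω.2⟩) (⟨·, hω.1⟩)).trans
          (measure_union_le _ _)
    _ ≤ (M * (2 * d * δ) : ℝ≥0) + (M * (2 * d * δ) : ℝ≥0) :=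
        add_le_add (hS.measure_walkSnd_eq_diff_holdSet_le hM δ x)
          (hS.measure_walkSnd_ne_and_eq_le hM δ x)
    _ = (4 * d * M * δ : ℝ≥0) := by
        rw [← ENNReal.coe_add]
        ring_nf

end IsCTSRW

end HoldingProbability

section LayeredWalk

variable {d : ℕ} {Ωz Ωw : Type*} {z : (Fin d → ℤ) → Ωz → ℝ} {ζ : Ωz}
  {S : ℝ → Ωw → Fin (d + 1) → ℤ}

lemma clock_eq_pathClock (hz : ∀ x, 0 ≤ z x ζ) {ω : Ωw} (hmeas : Measurable fun u ↦ S u ω)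
    (hpath : RightLocallyConstant fun u ↦ walkSnd S u ω) (t : ℝ≥0) :
    clock d z S t ζ ω = pathClock (fun x ↦ (z x ζ).toNNReal) t fun u ↦ walkSnd S u ω := by
  have htail : Measurable fun u (i : Fin d) ↦ S u ω i.succ :=
    measurable_pi_lambda _ fun i ↦ (measurable_pi_apply i.succ).comp hmeas
  rw [hpath.pathClock_eq, clock, integral_eq_lintegral_of_nonneg_ae (.of_forall fun u ↦ hz _)
    ((Measurable.of_discrete (f := fun x ↦ z x ζ)).comp htail).aestronglyMeasurable]
  refine congrArg ENNReal.toReal (setLIntegral_congr_fun measurableSet_Ioc fun u hu ↦ ?_)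
  simp only [walkSnd, Real.coe_toNNReal u hu.1.le]
  rfl

namespace IsCTSRW

variable [MeasurableSpace Ωw] {P : (Fin (d + 1) → ℤ) → Measure Ωw}

lemma ae_rightLocallyConstant {m : ℕ} {Ω : Type*} [MeasurableSpace Ω]
    {P : (Fin m → ℤ) → Measure Ω} {S : ℝ → Ω → Fin m → ℤ} (hS : IsCTSRW m P S) (o : Fin m → ℤ) :
    ∀ᵐ ω ∂P o, RightLocallyConstant fun u : ℝ≥0 ↦ S u ω := by
  filter_upwards [hS.rightCont o] with ω hω t
  obtain ⟨ε, hε, hconst⟩ := hω t t.coe_nonneg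
  have hlt : t < t + ε.toNNReal := lt_add_of_pos_right t (Real.toNNReal_pos.2 hε)
  filter_upwards [Ico_mem_nhdsGE hlt] with u hu
  refine hconst u hu.1 ?_
  rw [← Real.coe_toNNReal ε hε.le]
  exact_mod_cast hu.2

lemma ae_rightLocallyConstant_walkFst (hS : IsCTSRW (d + 1) P S) (o : Fin (d + 1) → ℤ) :
    ∀ᵐ ω ∂P o, RightLocallyConstant (walkFst S · ω) :=
  (hS.ae_rightLocallyConstant o).mono fun _ hω t ↦ (hω t).mono fun _ hu ↦ congrFun hu 0

lemma ae_rightLocallyConstant_walkSnd (hS : IsCTSRW (d + 1) P S) (o : Fin (d + 1) → ℤ) :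
    ∀ᵐ ω ∂P o, RightLocallyConstant (walkSnd S · ω) :=
  (hS.ae_rightLocallyConstant o).mono fun _ hω t ↦ (hω t).mono fun _ hu ↦ congrArg Fin.tail hu

lemma ae_layeredWalk_eq (hS : IsCTSRW (d + 1) P S) (o : Fin (d + 1) → ℤ)
    (hz : ∀ x, 0 ≤ z x ζ) (t : ℝ≥0) :
    ∀ᵐ ω ∂P o, layeredWalk d z S t ζ ω =
      (walkFst S (pathClock (fun x ↦ (z x ζ).toNNReal) t fun u ↦ walkSnd S u ω) ω,
        walkSnd S t ω) :=
  (hS.ae_rightLocallyConstant_walkSnd o).mono fun ω hω ↦ by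
    have hmeas : Measurable fun u ↦ S u ω := hS.meas.comp measurable_prodMk_right
    rw [layeredWalk, clock_eq_pathClock hz hmeas hω]
    rfl

end IsCTSRW

end LayeredWalk

section HoldTime

/-- The holding times `4⁻ⁿ`, written so that their square roots are visible. -/
noncomputable def holdTime (n : ℕ) : ℝ≥0 := ((1 / 2) ^ n) ^ 2

lemma inv_sqrt_mul_mul_holdTime (a c : ℝ≥0) (n : ℕ) :
    (NNReal.sqrt (a * holdTime (n + 1)))⁻¹ * (c * holdTime n) =
      2 * c * (NNReal.sqrt a)⁻¹ * (1 / 2) ^ n := by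
  rw [NNReal.sqrt_mul, holdTime, holdTime, NNReal.sqrt_sq, mul_inv, pow_succ]
  field_simp

lemma tsum_coe_mul_half_pow (c : ℝ≥0) : ∑' n : ℕ, ((c * (1 / 2) ^ n : ℝ≥0) : ℝ≥0∞) = c * 2 := by
  simp only [ENNReal.coe_mul, ENNReal.coe_pow, ENNReal.tsum_mul_left, ENNReal.tsum_geometric]
  congr 1
  rw [one_div, ENNReal.coe_inv two_ne_zero, ENNReal.coe_ofNat, ENNReal.one_sub_inv_two, inv_inv]

lemma holdTime_le_one (n : ℕ) : holdTime n ≤ 1 :=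
  pow_le_one₀ zero_le (pow_le_one₀ zero_le one_half_lt_one.le)

lemma tendsto_holdTime : Tendsto holdTime atTop (𝓝 0) := by
  have hpow := (NNReal.tendsto_pow_atTop_nhds_zero_of_lt_one (r := 1 / 2) one_half_lt_one).pow 2
  rwa [zero_pow two_ne_zero] at hpow

variable {E : Type*} {t : ℝ≥0} {x : E}

/-- The paths which sit at `x` at time `t`, but have not held there since time `t - 4⁻ⁿ`. -/
def recentArrivals (t : ℝ≥0) (x : E) (n : ℕ) : Set (ℝ≥0 → E) :=
  (fun p ↦ p t) ⁻¹' {x} \ holdSet (t - holdTime n) (holdTime n) x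

lemma measurableSet_recentArrivals [MeasurableSpace E] [MeasurableSingletonClass E] (t : ℝ≥0)
    (x : E) (n : ℕ) : MeasurableSet (recentArrivals t x n) :=
  (measurable_pi_apply t (measurableSet_singleton x)).diff (measurableSet_holdSet _ _ x)

lemma RightLocallyConstant.mem_recentArrivals_or_le_pathClock {p : ℝ≥0 → E}
    (hp : RightLocallyConstant p) {w : E → ℝ≥0} (ht : 1 ≤ t) (hpt : p t = x)
    (hclock : pathClock w t p ≠ 0) :
    (∀ n, p ∈ recentArrivals t x n) ∨ w x * holdTime 0 ≤ pathClock w t p ∨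
      ∃ n, p ∈ recentArrivals t x n ∧ w x * holdTime (n + 1) ≤ pathClock w t p := by
  classical
  have hclock_ge : ∀ n, p ∉ recentArrivals t x n → w x * holdTime n ≤ pathClock w t p :=
      fun n hn ↦ by
    have hhold : p ∈ holdSet (t - holdTime n) (holdTime n) x := by_contra fun h ↦ hn ⟨hpt, h⟩
    have hle := hp.mul_le_pathClock (w := w) (fun u hu ↦ hp.eq_of_mem_holdSet hhold hu)
    rw [tsub_add_cancel_of_le ((holdTime_le_one n).trans ht)] at hle
    exact hle hclock
  by_cases hhold : ∃ n, p ∉ recentArrivals t x n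
  · rcases hn : Nat.find hhold with _ | n
    · exact .inr (.inl (hclock_ge 0 (hn ▸ Nat.find_spec hhold)))
    · exact .inr (.inr ⟨n, not_not.1 (Nat.find_min hhold (hn ▸ n.lt_succ_self)),
        hclock_ge (n + 1) (hn ▸ Nat.find_spec hhold)⟩)
  · exact .inl (not_exists_not.1 hhold)

end HoldTime

section LayeredWalkUpperBound

variable {d : ℕ} {Ω : Type*} [MeasurableSpace Ω] {P : (Fin (d + 1) → ℤ) → Measure Ω}
  {S : ℝ → Ω → Fin (d + 1) → ℤ}

namespace IsCTSRW

variable {o : Fin (d + 1) → ℤ} {k : ℤ} {x : Fin d → ℤ} {t M : ℝ≥0}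
  {w : (Fin d → ℤ) → ℝ≥0}

lemma measure_walkFst_le (hS : IsCTSRW (d + 1) P S) {a s : ℝ≥0} (ha : 0 < a) (has : a ≤ s) :
    P o {ω | walkFst S s ω = k} ≤ ((NNReal.sqrt a)⁻¹ : ℝ≥0) := by
  have hs : 0 < (s : ℝ) := ha.trans_le has
  rw [hS.measure_walkFst_eq, linePMF_apply, ENNReal.ofReal_le_coe, NNReal.coe_inv, Real.coe_sqrt]
  calc lineKernel s (k - o 0) ≤ 1 / √(s : ℝ) := lineKernel_le hs _
    _ ≤ (√(a : ℝ))⁻¹ := by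
      rw [one_div]
      gcongr

lemma measure_walkFst_pathClock_eq_and_mem_le (hS : IsCTSRW (d + 1) P S) {a : ℝ≥0} (ha : 0 < a)
    {D : Set (ℝ≥0 → Fin d → ℤ)} (hD : MeasurableSet D) :
    P o {ω | walkFst S (pathClock w t (walkSnd S · ω)) ω = k ∧
        (walkSnd S · ω) ∈ D ∧ a ≤ pathClock w t (walkSnd S · ω)} ≤
      ((NNReal.sqrt a)⁻¹ : ℝ≥0) * P o {ω | (walkSnd S · ω) ∈ D} := by
  have hclock : Measurable (pathClock w t) := measurable_pathClock .of_discrete t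
  calc _ ≤ ((NNReal.sqrt a)⁻¹ : ℝ≥0) *
          P o ((fun ω u ↦ walkSnd S u ω) ⁻¹' (D ∩ {p | a ≤ pathClock w t p})) :=
        measure_independent_time_le (A := {k}) (hS.ae_rightLocallyConstant_walkFst o)
          (measurable_pi_lambda _ hS.measurable_walkSnd)
          (fun s ↦ (hS.indepFun_walkFst_walkSnd o).comp (measurable_pi_apply s) measurable_id)
          hclock (measurableSet_singleton k) (hD.inter (measurableSet_le measurable_const hclock))
          (fun _ hp ↦ hp.2) fun s has ↦ hS.measure_walkFst_le ha has
    _ ≤ _ := by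
        gcongr
        exact inter_subset_left

lemma measure_walkSnd_mem_recentArrivals_le (hS : IsCTSRW (d + 1) P S) (ht : 1 ≤ t)
    (hM : ∀ u, t - 1 ≤ u → ∀ y, latticePMF d u (Fin.tail o) y ≤ M) (x : Fin d → ℤ)
    (n : ℕ) :
    P o {ω | (walkSnd S · ω) ∈ recentArrivals t x n} ≤ (4 * d * M * holdTime n : ℝ≥0) := by
  have hle := hS.measure_walkSnd_add_eq_diff_holdSet_le
    (hM (t - holdTime n) (tsub_le_tsub_left (holdTime_le_one n) t)) (holdTime n) x
  rwa [tsub_add_cancel_of_le ((holdTime_le_one n).trans ht)] at hle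

lemma ae_exists_walkSnd_notMem_recentArrivals (hS : IsCTSRW (d + 1) P S) (ht : 1 ≤ t)
    (hM : ∀ u, t - 1 ≤ u → ∀ y, latticePMF d u (Fin.tail o) y ≤ M) (x : Fin d → ℤ) :
    ∀ᵐ ω ∂P o, ∃ n, (walkSnd S · ω) ∉ recentArrivals t x n := by
  have hlim : Tendsto (fun n ↦ ((4 * d * M * holdTime n : ℝ≥0) : ℝ≥0∞)) atTop (𝓝 0) := by
    rw [← ENNReal.coe_zero, ENNReal.tendsto_coe]
    simpa using tendsto_holdTime.const_mul (4 * d * M)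
  refine le_antisymm (ge_of_tendsto' hlim fun n ↦ ?_) zero_le
  refine (measure_mono ?_).trans (hS.measure_walkSnd_mem_recentArrivals_le ht hM x n)
  exact fun ω hω ↦ not_not.1 (not_exists.1 hω n)

lemma ae_walkFst_pathClock_eq_and_walkSnd_eq (hS : IsCTSRW (d + 1) P S) (hk : k ≠ o 0)
    (ht : 1 ≤ t) (hM : ∀ u, t - 1 ≤ u → ∀ y, latticePMF d u (Fin.tail o) y ≤ M)
    (w : (Fin d → ℤ) → ℝ≥0) (x : Fin d → ℤ) :
    ∀ᵐ ω ∂P o, walkFst S (pathClock w t (walkSnd S · ω)) ω = k ∧ walkSnd S t ω = x →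
      (walkFst S (pathClock w t (walkSnd S · ω)) ω = k ∧
        (walkSnd S · ω) ∈ (fun p ↦ p t) ⁻¹' {x} ∧
        w x * holdTime 0 ≤ pathClock w t (walkSnd S · ω)) ∨
      ∃ n, walkFst S (pathClock w t (walkSnd S · ω)) ω = k ∧
        (walkSnd S · ω) ∈ recentArrivals t x n ∧
        w x * holdTime (n + 1) ≤ pathClock w t (walkSnd S · ω) := by
  filter_upwards [hS.ae_rightLocallyConstant_walkSnd o, hS.start o,
    hS.ae_exists_walkSnd_notMem_recentArrivals ht hM x] with ω hpath hstart ⟨m, hm⟩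
  rintro ⟨hfst, hsnd⟩
  have hclock : pathClock w t (walkSnd S · ω) ≠ 0 := fun h0 ↦ hk <| by
    rw [← hfst, h0, walkFst, NNReal.coe_zero, hstart]
  rcases hpath.mem_recentArrivals_or_le_pathClock ht hsnd hclock with hall | h0 | ⟨n, hn, hle⟩
  · exact absurd (hall m) hm
  · exact .inl ⟨hfst, hsnd, h0⟩
  · exact .inr ⟨n, hfst, hn, hle⟩

lemma measure_walkFst_pathClock_eq_and_walkSnd_eq_le (hS : IsCTSRW (d + 1) P S) (hk : k ≠ o 0)
    (ht : 1 ≤ t) (hM : ∀ u, t - 1 ≤ u → ∀ y, latticePMF d u (Fin.tail o) y ≤ M) (hx : 0 < w x) :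
    P o {ω | walkFst S (pathClock w t (walkSnd S · ω)) ω = k ∧ walkSnd S t ω = x} ≤
      ((16 * d + 1) * M * (NNReal.sqrt (w x))⁻¹ : ℝ≥0) := by
  have hpos : ∀ n, 0 < w x * holdTime n := fun n ↦ mul_pos hx (by unfold holdTime; positivity)
  let F : Set Ω := {ω | walkFst S (pathClock w t (walkSnd S · ω)) ω = k ∧
    (walkSnd S · ω) ∈ (fun p ↦ p t) ⁻¹' {x} ∧
      w x * holdTime 0 ≤ pathClock w t (walkSnd S · ω)}
  let L : ℕ → Set Ω := fun n ↦ {ω | walkFst S (pathClock w t (walkSnd S · ω)) ω = k ∧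
    (walkSnd S · ω) ∈ recentArrivals t x n ∧
      w x * holdTime (n + 1) ≤ pathClock w t (walkSnd S · ω)}
  have hF : P o F ≤ ((NNReal.sqrt (w x))⁻¹ * M : ℝ≥0) := by
    rw [ENNReal.coe_mul]
    refine (hS.measure_walkFst_pathClock_eq_and_mem_le (hpos 0)
      (measurable_pi_apply t (measurableSet_singleton x))).trans ?_
    rw [holdTime, pow_zero, one_pow, mul_one]
    gcongr
    exact (hS.measure_walkSnd_eq o t x).trans_le (hM t tsub_le_self x)
  have hL : ∀ n, P o (L n) ≤ (2 * (4 * d * M) * (NNReal.sqrt (w x))⁻¹ * (1 / 2) ^ n : ℝ≥0) :=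
      fun n ↦ by
    rw [← inv_sqrt_mul_mul_holdTime, ENNReal.coe_mul]
    refine (hS.measure_walkFst_pathClock_eq_and_mem_le (hpos (n + 1))
      (measurableSet_recentArrivals t x n)).trans ?_
    gcongr
    exact hS.measure_walkSnd_mem_recentArrivals_le ht hM x n
  calc _ ≤ P o (F ∪ ⋃ n, L n) := measure_mono_ae <|
        (hS.ae_walkFst_pathClock_eq_and_walkSnd_eq hk ht hM w x).mono fun ω hω hωA ↦
          (hω hωA).imp_right mem_iUnion.2
    _ ≤ P o F + ∑' n, P o (L n) :=
        (measure_union_le _ _).trans (add_le_add le_rfl (measure_iUnion_le _))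
    _ ≤ ((NNReal.sqrt (w x))⁻¹ * M : ℝ≥0) +
          (2 * (4 * d * M) * (NNReal.sqrt (w x))⁻¹ : ℝ≥0) * 2 :=
        add_le_add hF ((ENNReal.tsum_le_tsum hL).trans_eq (tsum_coe_mul_half_pow _))
    _ = ((16 * d + 1) * M * (NNReal.sqrt (w x))⁻¹ : ℝ≥0) := by
        push_cast
        ring

end IsCTSRW

end LayeredWalkUpperBound

section Scenery

lemma summable_exp_neg_rpow {κ : ℝ} (hκ : 0 < κ) :
    Summable fun n : ℕ ↦ Real.exp (-(n : ℝ) ^ κ) := by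
  obtain ⟨k, hk⟩ := exists_nat_gt (2 / κ)
  have hκk : 1 < κ * k := by
    rw [div_lt_iff₀ hκ] at hk
    linarith
  refine Summable.of_norm_bounded_eventually_nat
    ((Real.summable_one_div_nat_rpow.2 hκk).mul_left (k.factorial : ℝ)) ?_
  filter_upwards [eventually_gt_atTop 0] with n hn
  have hn' : (0 : ℝ) < n := Nat.cast_pos.2 hn
  have hexp := Real.pow_div_factorial_le_exp _ (Real.rpow_pos_of_pos hn' κ).le k
  rw [Real.norm_of_nonneg (Real.exp_nonneg _), Real.exp_neg, Real.rpow_mul hn'.le,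
    Real.rpow_natCast, mul_one_div, ← inv_div]
  gcongr

/-- The discrete box `{0, …, n - 1}^d`, over which the extremes of the scenery are taken. -/
noncomputable def cornerBox (d n : ℕ) : Finset (Fin d → ℤ) :=
  Fintype.piFinset fun _ ↦ Finset.Ico (0 : ℤ) n

lemma card_cornerBox (d n : ℕ) : (cornerBox d n).card = n ^ d := by simp [cornerBox]

lemma abs_le_of_mem_cornerBox {d n : ℕ} {x : Fin d → ℤ} (hx : x ∈ cornerBox d n) (i : Fin d) :
    |(x i : ℝ)| ≤ n := by
  obtain ⟨hnonneg, hlt⟩ := Finset.mem_Ico.1 (Fintype.mem_piFinset.1 hx i)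
  rw [abs_of_nonneg (Int.cast_nonneg hnonneg)]
  exact_mod_cast hlt.le

lemma tendsto_natFloor_mul_sqrt {ρ : ℝ} (hρ : 0 < ρ) :
    Tendsto (fun t : ℝ ↦ ⌊ρ * √t⌋₊) atTop atTop :=
  tendsto_nat_floor_atTop.comp (Real.tendsto_sqrt_atTop.const_mul_atTop hρ)

lemma eventually_mul_le_natFloor_mul_sqrt_rpow {ρ β : ℝ} (hρ : 0 < ρ) (hβ : 2 < β) (Λ : ℝ) :
    ∀ᶠ t : ℝ in atTop, Λ * t ≤ (⌊ρ * √t⌋₊ : ℝ) ^ β := by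
  have hpow : Tendsto (fun n : ℕ ↦ (n : ℝ) ^ (β - 2)) atTop atTop :=
    (tendsto_rpow_atTop (by linarith)).comp tendsto_natCast_atTop_atTop
  filter_upwards [(tendsto_natFloor_mul_sqrt hρ).eventually
      (hpow.eventually_ge_atTop (4 * Λ / ρ ^ 2)),
    (tendsto_natFloor_mul_sqrt hρ).eventually (eventually_ge_atTop 1), eventually_gt_atTop 0]
    with t hratio hfloor ht
  set n := ⌊ρ * √t⌋₊
  have hn : (1 : ℝ) ≤ n := Nat.one_le_cast.2 hfloor
  have hhalf : ρ * √t / 2 ≤ n := by linarith [Nat.lt_floor_add_one (ρ * √t)]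
  calc Λ * t = (ρ * √t / 2) ^ 2 * (4 * Λ / ρ ^ 2) := by
        rw [div_pow, mul_pow, Real.sq_sqrt ht.le]
        field_simp
        norm_num
    _ ≤ (ρ * √t / 2) ^ 2 * (n : ℝ) ^ (β - 2) := by gcongr
    _ ≤ (n : ℝ) ^ 2 * (n : ℝ) ^ (β - 2) := by gcongr
    _ = (n : ℝ) ^ β := by
        rw [← Real.rpow_natCast, ← Real.rpow_add (by linarith)]
        congr 1
        push_cast
        ring

namespace IsScenery

variable {d : ℕ} {α : ℝ} {Ω : Type*} [MeasurableSpace Ω] {μ : Measure Ω}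
  {z : (Fin d → ℤ) → Ω → ℝ}

lemma eventually_rpow_neg_le_measureReal (hz : IsScenery d α μ z) (hα : 0 < α) {α' : ℝ}
    (hα' : α < α') : ∀ᶠ r : ℝ in atTop, r ^ (-α') ≤ μ.real {ζ | r < z 0 ζ} := by
  filter_upwards [hz.tail.eventually (lt_mem_nhds (neg_lt_neg hα')),
    hz.tail.eventually (gt_mem_nhds (neg_lt_zero.2 hα)), eventually_gt_atTop 1]
    with r hlower hupper hr
  have hlog : 0 < Real.log r := Real.log_pos hr
  have hpos : 0 < μ.real {ζ | r < z 0 ζ} := measureReal_nonneg.lt_of_ne fun h ↦ by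
    rw [← measureReal_def, ← h, Real.log_zero, zero_div] at hupper
    exact hupper.false
  rw [lt_div_iff₀ hlog, ← measureReal_def] at hlower
  rw [Real.rpow_def_of_pos (by linarith), ← Real.le_log_iff_exp_le hpos]
  linarith

lemma integral_pos (hz : IsScenery d α μ z) (hα : 0 < α) (hint : Integrable (z 0) μ) :
    0 < ∫ ζ, z 0 ζ ∂μ := by
  have := hz.prob
  obtain ⟨r, hr, hr_pos⟩ := ((hz.eventually_rpow_neg_le_measureReal hα (lt_add_one α)).and
    (eventually_gt_atTop 0)).exists
  refine (integral_pos_iff_support_of_nonneg (hz.nonneg 0) hint).2 <|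
    lt_of_lt_of_le ?_ (measure_mono fun ζ (hζ : r < z 0 ζ) ↦ (hr_pos.trans hζ).ne')
  exact (ENNReal.toReal_pos_iff.1 ((Real.rpow_pos_of_pos hr_pos _).trans_le hr)).1

lemma measureReal_forall_le_eq_pow (hz : IsScenery d α μ z) (B : Finset (Fin d → ℤ)) (s : ℝ) :
    μ.real {ζ | ∀ x ∈ B, z x ζ ≤ s} = (1 - μ.real {ζ | s < z 0 ζ}) ^ B.card := by
  have := hz.prob
  have hinter : {ζ | ∀ x ∈ B, z x ζ ≤ s} = ⋂ x ∈ B, z x ⁻¹' Iic s := by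
    ext ζ
    simp
  have hcompl : z 0 ⁻¹' Iic s = {ζ | s < z 0 ζ}ᶜ := by
    ext ζ
    simp
  have hident : ∀ x, μ (z x ⁻¹' Iic s) = μ {ζ | s < z 0 ζ}ᶜ := fun x ↦ by
    rw [(hz.ident x).measure_preimage_eq measurableSet_Iic, hcompl]
  rw [← probReal_compl_eq_one_sub (measurableSet_lt measurable_const (hz.meas 0)),
    measureReal_def, measureReal_def, hinter,
    hz.indep.measure_inter_preimage_eq_mul B fun _ _ ↦ measurableSet_Iic]
  simp only [hident, Finset.prod_const, ENNReal.toReal_pow]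

lemma eventually_measureReal_forall_cornerBox_le (hz : IsScenery d α μ z) (hα : 0 < α)
    {α' β : ℝ} (hα' : α < α') (hβ : 0 < β) :
    ∀ᶠ n : ℕ in atTop, μ.real {ζ | ∀ x ∈ cornerBox d n, z x ζ ≤ (n : ℝ) ^ β} ≤
      Real.exp (-(n : ℝ) ^ (d - β * α')) := by
  have := hz.prob
  have hlim : Tendsto (fun n : ℕ ↦ (n : ℝ) ^ β) atTop atTop :=
    (tendsto_rpow_atTop hβ).comp tendsto_natCast_atTop_atTop
  filter_upwards [hlim.eventually (hz.eventually_rpow_neg_le_measureReal hα hα'),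
    eventually_gt_atTop 0] with n htail hn
  have hn' : (0 : ℝ) < n := Nat.cast_pos.2 hn
  set p := μ.real {ζ | (n : ℝ) ^ β < z 0 ζ}
  rw [hz.measureReal_forall_le_eq_pow, card_cornerBox]
  calc (1 - p) ^ n ^ d ≤ Real.exp (-p) ^ n ^ d := by
        gcongr
        · exact sub_nonneg.2 measureReal_le_one
        · exact Real.one_sub_le_exp_neg p
    _ = Real.exp (-((n : ℝ) ^ d * p)) := by
        rw [← Real.exp_nat_mul]
        push_cast
        ring_nf
    _ ≤ Real.exp (-((n : ℝ) ^ d * ((n : ℝ) ^ β) ^ (-α'))) := by gcongr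
    _ = Real.exp (-(n : ℝ) ^ (d - β * α')) := by
        rw [← Real.rpow_mul hn'.le, ← Real.rpow_natCast, ← Real.rpow_add hn', mul_neg,
          ← sub_eq_add_neg]

lemma ae_eventually_exists_mem_cornerBox (hz : IsScenery d α μ z) (hα : 0 < α) {β : ℝ}
    (hβ : 0 < β) (hβα : β * α < d) :
    ∀ᵐ ζ ∂μ, ∀ᶠ n : ℕ in atTop, ∃ x ∈ cornerBox d n, (n : ℝ) ^ β < z x ζ := by
  have := hz.prob
  obtain ⟨α', hα', hα'_lt⟩ := exists_between ((lt_div_iff₀' hβ).2 hβα)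
  have hκ : 0 < d - β * α' := sub_pos.2 ((lt_div_iff₀' hβ).1 hα'_lt)
  have hsum : Summable fun n : ℕ ↦
      μ.real {ζ | ∀ x ∈ cornerBox d n, z x ζ ≤ (n : ℝ) ^ β} :=
    (summable_exp_neg_rpow hκ).of_norm_bounded_eventually_nat <|
      (hz.eventually_measureReal_forall_cornerBox_le hα hα' hβ).mono fun n hn ↦ by
        rwa [Real.norm_of_nonneg measureReal_nonneg]
  have hne_top := hsum.tsum_ofReal_ne_top
  simp only [ofReal_measureReal (measure_ne_top μ _)] at hne_top
  filter_upwards [ae_eventually_notMem hne_top] with ζ hζ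
  filter_upwards [hζ] with n hn
  simpa only [mem_ofPred_eq, not_forall, not_le, exists_prop] using hn

lemma ae_eventually_exists_mul_lt (hz : IsScenery d α μ z) (hα : 0 < α) (hαd : α < d / 2)
    {ρ : ℝ} (hρ : 0 < ρ) :
    ∀ᵐ ζ ∂μ, ∀ Λ : ℝ, ∀ᶠ t : ℝ in atTop,
      ∃ x : Fin d → ℤ, (∀ i, |(x i : ℝ)| ≤ ρ * √t) ∧ Λ * t < z x ζ := by
  obtain ⟨β, hβ, hβ_lt⟩ := exists_between
    ((lt_div_iff₀ hα).2 (by linarith : 2 * α < (d : ℝ)))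
  filter_upwards [hz.ae_eventually_exists_mem_cornerBox hα (by linarith)
    ((lt_div_iff₀ hα).1 hβ_lt)] with ζ hζ Λ
  filter_upwards [(tendsto_natFloor_mul_sqrt hρ).eventually hζ,
    eventually_mul_le_natFloor_mul_sqrt_rpow hρ hβ Λ] with t ⟨x, hx, hzx⟩ hΛ
  exact ⟨x, fun i ↦ (abs_le_of_mem_cornerBox hx i).trans (Nat.floor_le (by positivity)),
    hΛ.trans_lt hzx⟩

end IsScenery

end Scenery

section RatioBound

variable {d : ℕ} {Ωz Ωw : Type*} [MeasurableSpace Ωw] {P : (Fin (d + 1) → ℤ) → Measure Ωw}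
  {S : ℝ → Ωw → Fin (d + 1) → ℤ} {z : (Fin d → ℤ) → Ωz → ℝ} {ζ : Ωz} {x : Fin d → ℤ}

lemma latticePMF_le_of_sub_one_le {t u : ℝ≥0} (ht : 2 ≤ t) (hu : t - 1 ≤ u) (o y : Fin d → ℤ) :
    latticePMF d u o y ≤ ((NNReal.sqrt 2 / NNReal.sqrt t) ^ d : ℝ≥0) := by
  have : (2 : ℝ) ≤ t := mod_cast ht
  have hhalf : (t : ℝ) / 2 ≤ u := by
    have : (t : ℝ) ≤ u + 1 := mod_cast tsub_le_iff_right.1 hu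
    linarith
  rw [latticePMF_apply, ENNReal.ofReal_le_coe]
  push_cast
  calc latticeKernel d u (y - o) ≤ (1 / √(u : ℝ)) ^ d := latticeKernel_le (by linarith) _
    _ ≤ (1 / √((t : ℝ) / 2)) ^ d := by gcongr
    _ = (√2 / √(t : ℝ)) ^ d := by rw [Real.sqrt_div t.coe_nonneg, one_div_div]

namespace IsCTSRW

lemma measure_walkFst_eq_and_walkSnd_eq (hS : IsCTSRW (d + 1) P S) (o : Fin (d + 1) → ℤ)
    (s t : ℝ≥0) (k : ℤ) (x : Fin d → ℤ) :
    P o {ω | walkFst S s ω = k ∧ walkSnd S t ω = x} =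
      linePMF s (o 0) k * latticePMF d t (Fin.tail o) x := by
  rw [← hS.measure_walkFst_eq, ← hS.measure_walkSnd_eq]
  exact ((hS.indepFun_walkFst_walkSnd o).comp (measurable_pi_apply s)
    (measurable_pi_apply t)).measure_inter_preimage_eq_mul {k} {x}
    (measurableSet_singleton k) (measurableSet_singleton x)

lemma le_toReal_measure_prod_eq (hS : IsCTSRW (d + 1) P S) {s t : ℝ} (hs : 1 ≤ s) (ht : 1 ≤ t)
    {k : ℤ} (hk : |(k : ℝ)| ≤ √s / 10) (hx : ∀ i, |(x i : ℝ)| ≤ √t / 10) :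
    1 / (20 * √s) * (1 / (20 * √t)) ^ d ≤
      (P 0 {ω | (S s ω 0, fun i ↦ S t ω i.succ) = (k, x)}).toReal := by
  lift s to ℝ≥0 using by linarith
  lift t to ℝ≥0 using by linarith
  have hprod : (P 0 {ω | (S s ω 0, fun i ↦ S t ω i.succ) = (k, x)}).toReal =
      lineKernel s k * latticeKernel d t x := by
    simp only [Prod.mk_inj]
    have hmeas := congrArg ENNReal.toReal (hS.measure_walkFst_eq_and_walkSnd_eq 0 s t k x)
    rwa [linePMF_apply, latticePMF_apply, Pi.zero_apply, sub_zero,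
      show x - Fin.tail (0 : Fin (d + 1) → ℤ) = x from sub_zero x, ENNReal.toReal_mul,
      ENNReal.toReal_ofReal (lineKernel_nonneg s.coe_nonneg k),
      ENNReal.toReal_ofReal (latticeKernel_nonneg t.coe_nonneg x)] at hmeas
  rw [hprod]
  gcongr
  · exact lineKernel_nonneg s.coe_nonneg k
  · exact le_lineKernel hs hk
  · exact le_latticeKernel ht hx

lemma measure_layeredWalk_eq_le (hS : IsCTSRW (d + 1) P S) {t : ℝ≥0} (ht : 2 ≤ t)
    (hz : ∀ y, 0 ≤ z y ζ) (hx : 0 < z x ζ) {k : ℤ} (hk : k ≠ 0) :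
    P 0 {ω | layeredWalk d z S t ζ ω = (k, x)} ≤
      ((16 * d + 1) * (NNReal.sqrt 2 / NNReal.sqrt t) ^ d *
        (NNReal.sqrt (z x ζ).toNNReal)⁻¹ : ℝ≥0) := by
  refine (measure_mono_ae ?_).trans <| hS.measure_walkFst_pathClock_eq_and_walkSnd_eq_le
    (w := fun y ↦ (z y ζ).toNNReal) (o := 0) hk (one_le_two.trans ht)
    (fun u hu y ↦ latticePMF_le_of_sub_one_le ht hu _ y) (Real.toNNReal_pos.2 hx)
  filter_upwards [hS.ae_layeredWalk_eq 0 hz t] with ω hω hmem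
  exact Prod.mk_inj.1 (hω.symm.trans hmem)

lemma layeredWalk_ratio_le (hS : IsCTSRW (d + 1) P S) {m t : ℝ} (ht : 2 ≤ t) (hmt : 100 ≤ m * t)
    (hz : ∀ y, 0 ≤ z y ζ) (hzx : 0 < z x ζ) (hx : ∀ i, |(x i : ℝ)| ≤ √t / 10) :
    (P 0 {ω | layeredWalk d z S t ζ ω = (1, x)}).toReal /
        (P 0 {ω | (S (m * t) ω 0, fun i ↦ S t ω i.succ) = (1, x)}).toReal ≤
      20 * (16 * d + 1) * √m * (20 * √2) ^ d * (√t / √(z x ζ)) := by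
  have ht0 : 0 < t := by linarith
  have hm : 0 < m := pos_of_mul_pos_left (by linarith) ht0.le
  have hk : |((1 : ℤ) : ℝ)| ≤ √(m * t) / 10 := by
    have : 10 ≤ √(m * t) := Real.le_sqrt_of_sq_le (by linarith)
    rw [Int.cast_one, abs_one]
    linarith
  have hnum : (P 0 {ω | layeredWalk d z S t ζ ω = (1, x)}).toReal ≤
      (16 * d + 1) * (√2 / √t) ^ d / √(z x ζ) := by
    lift t to ℝ≥0 using ht0.le
    refine (ENNReal.toReal_mono ENNReal.coe_ne_top
      (hS.measure_layeredWalk_eq_le (mod_cast ht) hz hzx one_ne_zero)).trans_eq ?_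
    rw [ENNReal.coe_toReal]
    push_cast [Real.coe_toNNReal _ hzx.le]
    simp only [div_eq_mul_inv]
  calc _ ≤ (16 * d + 1) * (√2 / √t) ^ d / √(z x ζ) /
          (1 / (20 * √(m * t)) * (1 / (20 * √t)) ^ d) :=
        div_le_div₀ (by positivity) hnum (by positivity)
          (hS.le_toReal_measure_prod_eq (by linarith) (by linarith) hk hx)
    _ = 20 * (16 * d + 1) * √m * (20 * √2) ^ d * (√t / √(z x ζ)) := by
        rw [Real.sqrt_mul hm.le]
        simp only [div_pow, mul_pow, one_pow]
        field_simp

end IsCTSRW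

lemma euclNormProd_le {x : ℤ × (Fin d → ℤ)} {a b : ℝ} (ha : |(x.1 : ℝ)| ≤ a) (hb : 0 ≤ b)
    (hxb : ∀ i, |(x.2 i : ℝ)| ≤ b) : euclNormProd d x ≤ a + d * b := by
  have ha' : 0 ≤ a := (abs_nonneg _).trans ha
  have hd : (d : ℝ) ≤ (d : ℝ) ^ 2 := mod_cast Nat.le_self_pow two_ne_zero d
  refine Real.sqrt_le_iff.2 ⟨by positivity, ?_⟩
  calc (x.1 : ℝ) ^ 2 + ∑ i, (x.2 i : ℝ) ^ 2 ≤ a ^ 2 + ∑ _i : Fin d, b ^ 2 := by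
        refine add_le_add ?_ (Finset.sum_le_sum fun i _ ↦ ?_)
        · exact sq_le_sq' (abs_le.1 ha).1 (abs_le.1 ha).2
        · exact sq_le_sq' (abs_le.1 (hxb i)).1 (abs_le.1 (hxb i)).2
    _ = a ^ 2 + d * b ^ 2 := by simp
    _ ≤ a ^ 2 + (2 * a * (d * b) + d ^ 2 * b ^ 2) := by
        gcongr
        exact le_add_of_nonneg_of_le (by positivity) (by gcongr)
    _ = (a + d * b) ^ 2 := by ring

end RatioBound

theorem stmt9_general (d : ℕ) {α : ℝ} (hα : 0 < α) (hαd : α < d / 2)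
    {Ωz Ωw : Type*} [MeasurableSpace Ωz] [MeasurableSpace Ωw]
    {μ : Measure Ωz} {z : (Fin d → ℤ) → Ωz → ℝ} (hz : IsScenery d α μ z)
    {P : (Fin (d + 1) → ℤ) → Measure Ωw} {S : ℝ → Ωw → (Fin (d + 1) → ℤ)}
    (hS : IsCTSRW (d + 1) P S) {m : ℝ} (hm : 0 < m) :
    ∀ R > (0 : ℝ), ∀ᵐ ζ ∂ μ, ∀ ε > (0 : ℝ), ∀ᶠ t in (atTop : Filter ℝ),
      ∃ x : ℤ × (Fin d → ℤ), euclNormProd d x ≤ R * t ^ ((1 : ℝ) / 2) ∧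
        ((P 0) {ω | layeredWalk d z S t ζ ω = x}).toReal
            / ((P 0) {ω | (S (m * t) ω 0, fun i => S t ω i.succ) = x}).toReal
          < ε := by
  intro R hR
  have hd : (0 : ℝ) < d := by linarith
  set ρ := min (1 / 10) (R / (2 * d))
  have hρ : 0 < ρ := by positivity
  filter_upwards [hz.ae_eventually_exists_mul_lt hα hαd hρ] with ζ hζ ε hε
  set K := 20 * (16 * d + 1) * √m * (20 * √2) ^ d
  have : 0 < K := by positivity
  filter_upwards [hζ ((K / ε) ^ 2), eventually_ge_atTop 2, eventually_ge_atTop (100 / m),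
    eventually_ge_atTop ((2 / R) ^ 2)] with t ⟨x, hx, hzx⟩ ht htm htR
  have : 0 < t := by linarith
  have hzx_pos : 0 < z x ζ := lt_of_le_of_lt (by positivity) hzx
  have hsqrt : 2 / R ≤ √t := Real.le_sqrt_of_sq_le htR
  have hx10 : ∀ i, |(x i : ℝ)| ≤ √t / 10 := fun i ↦ (hx i).trans <| by
    rw [div_eq_mul_one_div, mul_comm]
    gcongr
    exact min_le_left _ _
  refine ⟨(1, x), ?_, (hS.layeredWalk_ratio_le ht ((div_le_iff₀' hm).1 htm) (hz.nonneg · ζ)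
    hzx_pos hx10).trans_lt ?_⟩
  · calc euclNormProd d (1, x) ≤ 1 + d * (ρ * √t) := euclNormProd_le (by simp) (by positivity) hx
      _ ≤ R * √t / 2 + d * (R / (2 * d) * √t) := by
          rw [div_le_iff₀' hR] at hsqrt
          gcongr
          · linarith
          · exact min_le_right _ _
      _ = R * t ^ ((1 : ℝ) / 2) := by
          rw [← Real.sqrt_eq_rpow]
          field_simp
          ring
  · have hlt : K / ε * √t < √(z x ζ) := by
      rw [← Real.sqrt_sq (by positivity : 0 ≤ K / ε), ← Real.sqrt_mul (by positivity)]
      exact Real.sqrt_lt_sqrt (by positivity) hzx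
    rw [← mul_div_assoc, div_lt_iff₀ (by positivity)]
    rwa [div_mul_eq_mul_div, div_lt_iff₀' hε] at hlt

/-- Proposition (failure of the quenched local CLT for `d ≥ 3`, `1 ≤ α < d/2`):
for every `R > 0`, ℙ-a.s., `inf_{|x| ≤ R√t} P₀^ω(X_t = x)/P̄₀(X_t = x) → 0` as `t → ∞`,
where `P̄₀(X_t = x) = P₀((S¹_{𝔼[z(0)]t}, S²_t) = x)` is the averaged-conductance kernel. -/
theorem stmt9 (d : ℕ) (hd : 3 ≤ d) (α : ℝ) (hα₁ : 1 ≤ α) (hα₂ : α < d / 2)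
    {Ωz Ωw : Type*} [MeasurableSpace Ωz] [MeasurableSpace Ωw]
    (μ : Measure Ωz) (z : (Fin d → ℤ) → Ωz → ℝ) (hz : IsScenery d α μ z)
    (hint : Integrable (z 0) μ)
    (P : (Fin (d + 1) → ℤ) → Measure Ωw) (S : ℝ → Ωw → (Fin (d + 1) → ℤ))
    (hS : IsCTSRW (d + 1) P S) :
    ∀ R > (0 : ℝ), ∀ᵐ ζ ∂ μ, ∀ ε > (0 : ℝ), ∀ᶠ t in (atTop : Filter ℝ),
      ∃ x : ℤ × (Fin d → ℤ), euclNormProd d x ≤ R * t ^ ((1 : ℝ) / 2) ∧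
        ((P 0) {ω | layeredWalk d z S t ζ ω = x}).toReal
            / ((P 0) {ω | (S ((∫ ζ', z 0 ζ' ∂ μ) * t) ω 0, fun i => S t ω i.succ) = x}).toReal
          < ε :=
  stmt9_general d (by linarith) hα₂ hz hS (hz.integral_pos (by linarith) hint)
end

section
/- Let d ≥ 3, 0 < α < d/2, ρ ∈ (max(1/α, 1), d/(2α)), and let ε > 0 satisfy αρ/d + ε < 1/2. For t > 0 and integers k ≥ 1 let D(k) = {x ∈ ℤ^d : k·t^{αρ/d+ε} ≤ |x| < (k+1)·t^{αρ/d+ε}} with |·| the Euclidean norm. Then ℙ-almost surely, for all sufficiently large t and all integers k with 1 ≤ k ≤ t^{1/2 − αρ/d − ε}, the cardinality of {x ∈ D(k) : z(x) ≥ t^ρ} lies strictly between k^{d−1} t^{(d−1)ε} and k^{d−1} t^{(d+1)ε}. -/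
open MeasureTheory ProbabilityTheory Filter Set

open MeasureTheory ProbabilityTheory Filter Set

/-- Euclidean norm of a point of `ℤ^d`. -/
noncomputable def euclNorm (d : ℕ) (x : Fin d → ℤ) : ℝ :=
  Real.sqrt (∑ i, (x i : ℝ) ^ 2)

/-!
Let `β > α * ρ / d`. Comparing cardinalities with volumes shows that the annulus with radii
`k * t ^ β` and `(k + 1) * t ^ β` has about `k ^ (d - 1) * t ^ (β * d)` points, each of which is
high with probability `t ^ (-α * ρ + o(1))`. By independence and Chernoff's bound, the number of
high points is off by a power of `t` with probability at most `exp (-c * t ^ δ)`. This is summable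
over integers `t` and `k ≤ t / 8`, so the Borel-Cantelli lemma applies. For `t ∈ [n, n + 1]` the
count is sandwiched between the count in a slightly thinner annulus at the higher level
`(n + 1) ^ ρ` and that in a slightly thicker annulus at the lower level `n ^ ρ`; the change of width
is negligible as long as `β ≤ 1` and `k ≤ n / 8`. Substituting `t ^ M` for `t` with `M` large
removes these two restrictions.
-/

section PowerBounds

lemma sub_mul_pow_le_pow_sub_pow {x y : ℝ} (hx : 0 ≤ x) (hxy : x ≤ y) {n : ℕ} (hn : n ≠ 0) :
    (y - x) * x ^ (n - 1) ≤ y ^ n - x ^ n := by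
  obtain ⟨m, rfl⟩ := Nat.exists_eq_succ_of_ne_zero hn
  have hpow : x ^ m ≤ y ^ m := pow_le_pow_left₀ hx hxy m
  have hmul : y * x ^ m ≤ y * y ^ m := mul_le_mul_of_nonneg_left hpow (hx.trans hxy)
  simp only [Nat.succ_eq_add_one, Nat.add_sub_cancel, pow_succ']
  linarith

lemma pow_sub_pow_le_sub_mul_pow {x y : ℝ} (hx : 0 ≤ x) (hxy : x ≤ y) (n : ℕ) :
    y ^ n - x ^ n ≤ (y - x) * (n * y ^ (n - 1)) := by
  have h := (le_abs_self _).trans (abs_pow_sub_pow_le y x n)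
  rwa [abs_of_nonneg (sub_nonneg.2 hxy), abs_of_nonneg (hx.trans hxy), abs_of_nonneg hx,
    max_eq_left hxy, mul_assoc] at h

lemma mul_add_one_rpow_sub_rpow_le {x a : ℝ} (hx : 0 < x) (ha₀ : 0 ≤ a) (ha₁ : a ≤ 1) :
    x * ((x + 1) ^ a - x ^ a) ≤ x ^ a := by
  have hbernoulli : (1 + x⁻¹) ^ a ≤ 1 + a * x⁻¹ :=
    rpow_one_add_le_one_add_mul_self (by linarith [inv_pos.2 hx]) ha₀ ha₁
  calc x * ((x + 1) ^ a - x ^ a) = x * (x ^ a * ((1 + x⁻¹) ^ a - 1)) := by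
        rw [mul_sub_one, ← Real.mul_rpow hx.le (by positivity), mul_add, mul_one,
          mul_inv_cancel₀ hx.ne']
    _ ≤ x * (x ^ a * (a * x⁻¹)) := by gcongr; linarith
    _ = a * x ^ a := by field_simp
    _ ≤ x ^ a := mul_le_of_le_one_left (by positivity) ha₁

lemma eventually_const_mul_rpow_le_rpow (C : ℝ) {p q : ℝ} (hpq : p < q) :
    ∀ᶠ x : ℝ in atTop, C * x ^ p ≤ x ^ q := by
  filter_upwards [(tendsto_rpow_atTop (sub_pos.2 hpq)).eventually_ge_atTop C,
    eventually_gt_atTop 0] with x hC hx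
  calc C * x ^ p ≤ x ^ (q - p) * x ^ p := by gcongr
    _ = x ^ q := by rw [← Real.rpow_add hx, sub_add_cancel]

lemma eventually_rpow_le_of_tendsto_log_div_log {f : ℝ → ℝ} {a p : ℝ} (hf : ∀ x, 0 ≤ f x)
    (ha : a ≠ 0) (hlim : Tendsto (fun x => Real.log (f x) / Real.log x) atTop (nhds a))
    (hp : p < a) : ∀ᶠ x in atTop, x ^ p ≤ f x := by
  filter_upwards [hlim.eventually_ne ha, hlim.eventually_const_lt hp, eventually_gt_atTop 1]
    with x hne hlt hx
  -- `Real.log 0 = 0`, so a nonzero quotient of logarithms rules out `f x = 0`.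
  have hpos : 0 < f x := (hf x).lt_of_ne' fun h => hne (by simp [h])
  rw [Real.rpow_def_of_pos (by linarith), ← Real.le_log_iff_exp_le hpos, mul_comm]
  exact ((lt_div_iff₀ (Real.log_pos hx)).1 hlt).le

lemma eventually_le_rpow_of_tendsto_log_div_log {f : ℝ → ℝ} {a p : ℝ} (hf : ∀ x, 0 ≤ f x)
    (hlim : Tendsto (fun x => Real.log (f x) / Real.log x) atTop (nhds a))
    (hp : a < p) : ∀ᶠ x in atTop, f x ≤ x ^ p := by
  filter_upwards [hlim.eventually_lt_const hp, eventually_gt_atTop 1] with x hlt hx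
  rcases (hf x).eq_or_lt with h | hpos
  · exact h ▸ Real.rpow_nonneg (by linarith) p
  · rw [Real.rpow_def_of_pos (by linarith), ← Real.log_le_iff_le_exp hpos, mul_comm]
    exact ((div_lt_iff₀ (Real.log_pos hx)).1 hlt).le

lemma summable_mul_exp_neg_mul_rpow {c q : ℝ} (hc : 0 < c) (hq : 0 < q) :
    Summable fun n : ℕ => (n : ℝ) * Real.exp (-c * (n : ℝ) ^ q) := by
  have hexp : (fun x : ℝ => Real.exp (-c * x ^ q)) =O[atTop] fun x => (x ^ q) ^ (-3 / q) :=
    ((isLittleO_exp_neg_mul_rpow_atTop hc (-3 / q)).comp_tendsto (tendsto_rpow_atTop hq)).isBigO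
  have hmul : (fun x : ℝ => x * Real.exp (-c * x ^ q)) =O[atTop] fun x => x ^ (-2 : ℝ) := by
    refine ((Asymptotics.isBigO_refl (fun x : ℝ => x) atTop).mul hexp).trans_eventuallyEq ?_
    filter_upwards [eventually_gt_atTop 0] with x hx
    rw [← Real.rpow_mul hx.le, mul_div_cancel₀ _ hq.ne', ← Real.rpow_one_add' hx.le (by norm_num)]
    norm_num
  exact summable_of_isBigO_nat (Real.summable_nat_rpow.2 (by norm_num))
    (hmul.comp_tendsto tendsto_natCast_atTop_atTop)

end PowerBounds

section LatticePoints

variable {d : ℕ}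

/-- The inclusion of `ℤ^d` into Euclidean space. -/
noncomputable def latticePoint (x : Fin d → ℤ) : EuclideanSpace ℝ (Fin d) :=
  WithLp.toLp 2 fun i => (x i : ℝ)

/-- The coordinatewise floor. Its fibres are the half-open unit cubes with lattice corners, which
serve to compare numbers of lattice points with volumes. -/
noncomputable def latticeFloor (v : EuclideanSpace ℝ (Fin d)) : Fin d → ℤ := fun i => ⌊v i⌋

lemma norm_latticePoint (x : Fin d → ℤ) : ‖latticePoint x‖ = euclNorm d x := by
  simp [latticePoint, euclNorm, EuclideanSpace.norm_eq]

lemma norm_sub_latticePoint_latticeFloor_le (v : EuclideanSpace ℝ (Fin d)) :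
    ‖v - latticePoint (latticeFloor v)‖ ≤ √d := by
  rw [EuclideanSpace.norm_eq]
  refine Real.sqrt_le_sqrt ?_
  calc ∑ i, ‖(v - latticePoint (latticeFloor v)) i‖ ^ 2 = ∑ i, Int.fract (v i) ^ 2 := by
        simp [latticePoint, latticeFloor]
    _ ≤ ∑ _i : Fin d, (1 : ℝ) := by
        gcongr with i
        exact pow_le_one₀ (Int.fract_nonneg _) (Int.fract_lt_one _).le
    _ = d := by simp

lemma measurable_latticeFloor : Measurable (latticeFloor (d := d)) :=
  measurable_pi_lambda _ fun _ => Int.measurable_floor.comp (by fun_prop)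

lemma volume_latticeFloor_preimage_singleton (x : Fin d → ℤ) :
    volume (latticeFloor ⁻¹' {x}) = 1 := by
  have hcube : latticeFloor ⁻¹' {x} =
      WithLp.ofLp ⁻¹' univ.pi fun i => Ico (x i : ℝ) (x i + 1) := by
    ext v
    simp [latticeFloor, funext_iff, Int.floor_eq_iff]
  rw [hcube, (PiLp.volume_preserving_ofLp (Fin d)).measure_preimage
    (MeasurableSet.univ_pi fun _ => measurableSet_Ico).nullMeasurableSet, Real.volume_pi_Ico]
  simp

lemma map_latticeFloor_volume :
    volume.map (latticeFloor (d := d)) = Measure.count := by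
  refine Measure.ext_of_singleton fun x => ?_
  rw [Measure.map_apply measurable_latticeFloor (measurableSet_singleton x),
    volume_latticeFloor_preimage_singleton, Measure.count_singleton]

lemma volume_latticeFloor_preimage (A : Finset (Fin d → ℤ)) :
    volume (latticeFloor ⁻¹' (A : Set (Fin d → ℤ))) = A.card := by
  rw [← Measure.map_apply measurable_latticeFloor A.measurableSet, map_latticeFloor_volume,
    Measure.count_apply_finset]

lemma measureReal_ball_sdiff_ball {E : Type*} [NormedAddCommGroup E] [NormedSpace ℝ E]
    [MeasurableSpace E] [BorelSpace E] [FiniteDimensional ℝ E] [Nontrivial E] (ν : Measure E)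
    [ν.IsAddHaarMeasure] {r R : ℝ} (hr : 0 ≤ r) (hrR : r ≤ R) :
    ν.real (Metric.ball 0 R \ Metric.ball 0 r) =
      ν.real (Metric.ball 0 1) * (R ^ Module.finrank ℝ E - r ^ Module.finrank ℝ E) := by
  have hball {s : ℝ} (hs : 0 ≤ s) : ν.real (Metric.ball 0 s) =
      s ^ Module.finrank ℝ E * ν.real (Metric.ball 0 1) := by
    rw [Measure.real, Measure.addHaar_ball ν 0 hs, ENNReal.toReal_mul,
      ENNReal.toReal_ofReal (by positivity), Measure.real]
  rw [measureReal_sdiff (Metric.ball_subset_ball hrR) measurableSet_ball measure_ball_lt_top.ne,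
    hball hr, hball (hr.trans hrR)]
  ring

lemma finite_setOf_euclNorm_lt (d : ℕ) (R : ℝ) : {x : Fin d → ℤ | euclNorm d x < R}.Finite := by
  refine (Set.Finite.pi' fun _ : Fin d => Set.finite_Icc (-⌈R⌉) ⌈R⌉).subset fun x hx i => ?_
  have hcoord : |(x i : ℝ)| ≤ ⌈R⌉ := by
    calc |(x i : ℝ)| ≤ ‖latticePoint x‖ := PiLp.norm_apply_le (latticePoint x) i
      _ ≤ R := (norm_latticePoint x).trans_le (le_of_lt hx)
      _ ≤ ⌈R⌉ := Int.le_ceil R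
  exact abs_le.1 (by exact_mod_cast hcoord)

/-- The annulus `{x ∈ ℤ^d : r ≤ |x| < R}` as a finite set. -/
noncomputable def latticeAnnulus (d : ℕ) (r R : ℝ) : Finset (Fin d → ℤ) :=
  ((finite_setOf_euclNorm_lt d R).subset fun _ hx => hx.2 :
    {x | r ≤ euclNorm d x ∧ euclNorm d x < R}.Finite).toFinset

lemma mem_latticeAnnulus {r R : ℝ} {x : Fin d → ℤ} :
    x ∈ latticeAnnulus d r R ↔ r ≤ euclNorm d x ∧ euclNorm d x < R := by
  simp [latticeAnnulus]

lemma latticeAnnulus_subset_latticeAnnulus {r r' R R' : ℝ} (hr : r' ≤ r) (hR : R ≤ R') :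
    latticeAnnulus d r R ⊆ latticeAnnulus d r' R' := fun _ hx =>
  mem_latticeAnnulus.2
    ⟨hr.trans (mem_latticeAnnulus.1 hx).1, (mem_latticeAnnulus.1 hx).2.trans_le hR⟩

lemma ball_sdiff_ball_subset_latticeFloor_preimage (r R : ℝ) :
    Metric.ball 0 (R - √d) \ Metric.ball 0 (r + √d) ⊆
      latticeFloor ⁻¹' (latticeAnnulus d r R : Set (Fin d → ℤ)) := by
  intro v hv
  simp only [Set.mem_sdiff, mem_ball_zero_iff, not_lt] at hv
  have hfloor := norm_sub_latticePoint_latticeFloor_le v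
  rw [mem_preimage, Finset.mem_coe, mem_latticeAnnulus, ← norm_latticePoint]
  constructor
  · linarith [norm_le_norm_add_norm_sub' v (latticePoint (latticeFloor v))]
  · linarith [norm_le_norm_add_norm_sub v (latticePoint (latticeFloor v))]

lemma latticeFloor_preimage_subset_ball_sdiff_ball (r R : ℝ) :
    latticeFloor ⁻¹' (latticeAnnulus d r R : Set (Fin d → ℤ)) ⊆
      Metric.ball 0 (R + √d) \ Metric.ball 0 (r - √d) := by
  intro v hv
  rw [mem_preimage, Finset.mem_coe, mem_latticeAnnulus, ← norm_latticePoint] at hv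
  have hfloor := norm_sub_latticePoint_latticeFloor_le v
  simp only [Set.mem_sdiff, mem_ball_zero_iff, not_lt]
  constructor
  · linarith [norm_le_norm_add_norm_sub' v (latticePoint (latticeFloor v))]
  · linarith [norm_le_norm_add_norm_sub v (latticePoint (latticeFloor v))]

lemma mul_pow_le_card_latticeAnnulus [NeZero d] {r R : ℝ} (hr : 0 ≤ r) (hrR : r + √d ≤ R - √d) :
    volume.real (Metric.ball (0 : EuclideanSpace ℝ (Fin d)) 1) *
      ((R - r - 2 * √d) * r ^ (d - 1)) ≤ (latticeAnnulus d r R).card := by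
  have hvol := ENNReal.toReal_mono (by simp [volume_latticeFloor_preimage])
    (measure_mono (μ := volume) (ball_sdiff_ball_subset_latticeFloor_preimage (d := d) r R))
  rw [volume_latticeFloor_preimage, ENNReal.toReal_natCast, ← Measure.real,
    measureReal_ball_sdiff_ball volume (by positivity) hrR, finrank_euclideanSpace_fin] at hvol
  refine le_trans (mul_le_mul_of_nonneg_left ?_ measureReal_nonneg) hvol
  calc (R - r - 2 * √d) * r ^ (d - 1)
      ≤ ((R - √d) - (r + √d)) * (r + √d) ^ (d - 1) := by
        rw [show (R - √d) - (r + √d) = R - r - 2 * √d by ring]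
        gcongr
        · linarith
        · linarith [Real.sqrt_nonneg d]
    _ ≤ (R - √d) ^ d - (r + √d) ^ d :=
        sub_mul_pow_le_pow_sub_pow (by positivity) hrR (NeZero.ne d)

lemma card_latticeAnnulus_le_mul_pow [NeZero d] {r R : ℝ} (hr : √d ≤ r) (hrR : r ≤ R) :
    ((latticeAnnulus d r R).card : ℝ) ≤
      volume.real (Metric.ball (0 : EuclideanSpace ℝ (Fin d)) 1) *
        ((R - r + 2 * √d) * (d * (R + √d) ^ (d - 1))) := by
  have hsqrt := Real.sqrt_nonneg d
  have hvol := ENNReal.toReal_mono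
    ((measure_mono sdiff_subset).trans_lt (measure_ball_lt_top (μ := volume))).ne
    (measure_mono (μ := volume) (latticeFloor_preimage_subset_ball_sdiff_ball (d := d) r R))
  rw [volume_latticeFloor_preimage, ENNReal.toReal_natCast, ← Measure.real,
    measureReal_ball_sdiff_ball volume (sub_nonneg.2 hr) (by linarith),
    finrank_euclideanSpace_fin] at hvol
  refine hvol.trans (mul_le_mul_of_nonneg_left ?_ measureReal_nonneg)
  have h := pow_sub_pow_le_sub_mul_pow (sub_nonneg.2 hr) (by linarith : r - √d ≤ R + √d) d
  rwa [show (R + √d) - (r - √d) = R - r + 2 * √d by ring] at h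

lemma le_card_latticeAnnulus_mul_mul [NeZero d] {k : ℕ} {s s' : ℝ} (hs : s ≤ s')
    (hgap : (k + 1) * (s' - s) ≤ s / 4) (hd : √d ≤ s / 8) :
    volume.real (Metric.ball (0 : EuclideanSpace ℝ (Fin d)) 1) / 2 * (k ^ (d - 1) * s ^ d) ≤
      (latticeAnnulus d (k * s') ((k + 1) * s)).card := by
  have hs0 : 0 ≤ s := by linarith [Real.sqrt_nonneg d]
  have hwidth : s / 2 ≤ (k + 1) * s - k * s' - 2 * √d := by linarith
  refine le_trans ?_ (mul_pow_le_card_latticeAnnulus (mul_nonneg k.cast_nonneg (hs0.trans hs))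
    (by linarith))
  calc volume.real (Metric.ball (0 : EuclideanSpace ℝ (Fin d)) 1) / 2 * (k ^ (d - 1) * s ^ d)
      = volume.real (Metric.ball (0 : EuclideanSpace ℝ (Fin d)) 1) *
          (s / 2 * (k * s) ^ (d - 1)) := by
        rw [mul_pow, ← mul_pow_sub_one (NeZero.ne d) s]
        ring
    _ ≤ volume.real (Metric.ball (0 : EuclideanSpace ℝ (Fin d)) 1) *
          (((k + 1) * s - k * s' - 2 * √d) * (k * s') ^ (d - 1)) := by
        gcongr
        linarith

lemma card_latticeAnnulus_mul_mul_le [NeZero d] {k : ℕ} {s s' : ℝ} (hk : 1 ≤ k) (hs : s ≤ s')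
    (hgap : (k + 1) * (s' - s) ≤ s / 4) (hd : √d ≤ s / 8) :
    ((latticeAnnulus d (k * s) ((k + 1) * s')).card : ℝ) ≤
      volume.real (Metric.ball (0 : EuclideanSpace ℝ (Fin d)) 1) * (2 * d * 3 ^ (d - 1)) *
        (k ^ (d - 1) * s ^ d) := by
  have hs0 : 0 ≤ s := by linarith [Real.sqrt_nonneg d]
  have hs'0 : 0 ≤ s' := hs0.trans hs
  have hks : s ≤ k * s := le_mul_of_one_le_left hs0 (by exact_mod_cast hk)
  have hks' : k * s ≤ (k + 1) * s' := by gcongr; linarith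
  have hwidth : (k + 1) * s' - k * s + 2 * √d ≤ 2 * s := by linarith
  calc ((latticeAnnulus d (k * s) ((k + 1) * s')).card : ℝ)
      ≤ volume.real (Metric.ball (0 : EuclideanSpace ℝ (Fin d)) 1) *
          (((k + 1) * s' - k * s + 2 * √d) * (d * ((k + 1) * s' + √d) ^ (d - 1))) :=
        card_latticeAnnulus_le_mul_pow (by linarith) hks'
    _ ≤ volume.real (Metric.ball (0 : EuclideanSpace ℝ (Fin d)) 1) *
          (2 * s * (d * (3 * (k * s)) ^ (d - 1))) := by
        gcongr
        linarith
    _ = _ := by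
        rw [mul_pow, mul_pow, ← mul_pow_sub_one (NeZero.ne d) s]
        ring

end LatticePoints

section Chernoff

variable {Ω ι : Type*} [MeasurableSpace Ω] {μ : Measure Ω}

lemma mgf_le_exp_of_mem_Icc_zero_one [IsProbabilityMeasure μ] {X : Ω → ℝ} (hX : Measurable X)
    (hX01 : ∀ ω, X ω ∈ Icc 0 1) (t : ℝ) :
    mgf X μ t ≤ Real.exp (μ[X] * (Real.exp t - 1)) := by
  have hint : Integrable X μ := .of_mem_Icc 0 1 hX.aemeasurable (.of_forall hX01)
  have hchord (ω : Ω) : Real.exp (t * X ω) ≤ 1 + X ω * (Real.exp t - 1) := by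
    have h := convexOn_exp.2 (mem_univ 0) (mem_univ t) (sub_nonneg.2 (hX01 ω).2) (hX01 ω).1
      (sub_add_cancel 1 (X ω))
    simp only [smul_eq_mul, mul_zero, zero_add, Real.exp_zero, mul_one] at h
    rw [mul_comm t]
    linarith
  calc mgf X μ t ≤ ∫ ω, 1 + X ω * (Real.exp t - 1) ∂μ :=
        integral_mono (integrable_exp_mul_of_mem_Icc hX.aemeasurable (.of_forall hX01))
          ((integrable_const 1).add (hint.mul_const _)) hchord
    _ = μ[X] * (Real.exp t - 1) + 1 := by
        rw [integral_add (integrable_const 1) (hint.mul_const _), integral_mul_const]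
        simp [add_comm]
    _ ≤ Real.exp (μ[X] * (Real.exp t - 1)) := Real.add_one_le_exp _

lemma mgf_sum_le_exp_of_mem_Icc_zero_one {X : ι → Ω → ℝ} (hindep : iIndepFun X μ)
    (hX : ∀ i, Measurable (X i)) (hX01 : ∀ i ω, X i ω ∈ Icc 0 1) (s : Finset ι) (t : ℝ) :
    mgf (∑ i ∈ s, X i) μ t ≤ Real.exp ((∑ i ∈ s, μ[X i]) * (Real.exp t - 1)) := by
  have := hindep.isProbabilityMeasure
  rw [hindep.mgf_sum hX, Finset.sum_mul, Real.exp_sum]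
  exact Finset.prod_le_prod (fun _ _ => mgf_nonneg) fun i _ =>
    mgf_le_exp_of_mem_Icc_zero_one (hX i) (hX01 i) t

lemma measureReal_le_sum_le_exp {X : ι → Ω → ℝ} (hindep : iIndepFun X μ)
    (hX : ∀ i, Measurable (X i)) (hX01 : ∀ i ω, X i ω ∈ Icc 0 1) (s : Finset ι) (c : ℝ) :
    μ.real {ω | c ≤ (∑ i ∈ s, X i) ω} ≤ Real.exp (2 * ∑ i ∈ s, μ[X i] - c) := by
  have := hindep.isProbabilityMeasure
  have hmean : 0 ≤ ∑ i ∈ s, μ[X i] :=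
    Finset.sum_nonneg fun i _ => integral_nonneg fun ω => (hX01 i ω).1
  calc μ.real {ω | c ≤ (∑ i ∈ s, X i) ω}
      ≤ Real.exp (-1 * c) * mgf (∑ i ∈ s, X i) μ 1 :=
        measure_ge_le_exp_mul_mgf c zero_le_one <| hindep.integrable_exp_mul_sum hX fun i _ =>
          integrable_exp_mul_of_mem_Icc (hX i).aemeasurable (.of_forall (hX01 i))
    _ ≤ Real.exp (-1 * c) * Real.exp ((∑ i ∈ s, μ[X i]) * (Real.exp 1 - 1)) := by
        gcongr
        exact mgf_sum_le_exp_of_mem_Icc_zero_one hindep hX hX01 s 1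
    _ ≤ Real.exp (2 * ∑ i ∈ s, μ[X i] - c) := by
        rw [← Real.exp_add, Real.exp_le_exp]
        nlinarith [Real.exp_one_lt_three]

lemma measureReal_sum_le_le_exp {X : ι → Ω → ℝ} (hindep : iIndepFun X μ)
    (hX : ∀ i, Measurable (X i)) (hX01 : ∀ i ω, X i ω ∈ Icc 0 1) (s : Finset ι) (c : ℝ) :
    μ.real {ω | (∑ i ∈ s, X i) ω ≤ c} ≤ Real.exp (c - (∑ i ∈ s, μ[X i]) / 2) := by
  have := hindep.isProbabilityMeasure
  have hmean : 0 ≤ ∑ i ∈ s, μ[X i] :=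
    Finset.sum_nonneg fun i _ => integral_nonneg fun ω => (hX01 i ω).1
  have hexp : Real.exp (-1) ≤ 1 / 2 := by linarith [Real.exp_neg_one_lt_half]
  calc μ.real {ω | (∑ i ∈ s, X i) ω ≤ c}
      ≤ Real.exp (-(-1) * c) * mgf (∑ i ∈ s, X i) μ (-1) :=
        measure_le_le_exp_mul_mgf c (by norm_num) <| hindep.integrable_exp_mul_sum hX fun i _ =>
          integrable_exp_mul_of_mem_Icc (hX i).aemeasurable (.of_forall (hX01 i))
    _ ≤ Real.exp (-(-1) * c) * Real.exp ((∑ i ∈ s, μ[X i]) * (Real.exp (-1) - 1)) := by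
        gcongr
        exact mgf_sum_le_exp_of_mem_Icc_zero_one hindep hX hX01 s (-1)
    _ ≤ Real.exp (c - (∑ i ∈ s, μ[X i]) / 2) := by
        rw [← Real.exp_add, Real.exp_le_exp]
        nlinarith

end Chernoff

section BorelCantelli

variable {Ω ι : Type*} [MeasurableSpace Ω] {μ : Measure Ω}

lemma ae_eventually_forall_mem_notMem [IsFiniteMeasure μ] {F : ℕ → ι → Set Ω}
    {S : ℕ → Finset ι} {b : ℕ → ℝ} (hb : Summable fun n => (S n).card * b n)
    (hF : ∀ᶠ n in atTop, ∀ i ∈ S n, μ.real (F n i) ≤ b n) :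
    ∀ᵐ ω ∂μ, ∀ᶠ n in atTop, ∀ i ∈ S n, ω ∉ F n i := by
  have hunion : Summable fun n => μ.real (⋃ i ∈ S n, F n i) := by
    refine hb.of_norm_bounded_eventually_nat ?_
    filter_upwards [hF] with n hn
    calc ‖μ.real (⋃ i ∈ S n, F n i)‖ = μ.real (⋃ i ∈ S n, F n i) :=
          Real.norm_of_nonneg measureReal_nonneg
      _ ≤ ∑ i ∈ S n, μ.real (F n i) := measureReal_biUnion_finset_le _ _
      _ ≤ (S n).card * b n := by
          simpa only [nsmul_eq_mul] using Finset.sum_le_card_nsmul _ _ _ hn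
  have hsum : ∑' n, μ (⋃ i ∈ S n, F n i) ≠ ⊤ := by
    simpa only [ofReal_measureReal (measure_ne_top μ _)] using hunion.tsum_ofReal_ne_top
  simpa only [mem_iUnion, not_exists] using ae_eventually_notMem hsum

end BorelCantelli

section HighPoints

variable {Ω ι : Type*}

/-- The set of points of `A` at which the random field `z` is at least `u`. -/
noncomputable def highPoints (z : ι → Ω → ℝ) (A : Finset ι) (u : ℝ) (ω : Ω) : Finset ι :=
  A.filter fun x => u ≤ z x ω

lemma highPoints_subset_highPoints (z : ι → Ω → ℝ) {A B : Finset ι} (hAB : A ⊆ B) {u v : ℝ}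
    (huv : u ≤ v) (ω : Ω) : highPoints z A v ω ⊆ highPoints z B u ω := fun _ hx =>
  Finset.mem_filter.2
    ⟨hAB (Finset.mem_filter.1 hx).1, huv.trans (Finset.mem_filter.1 hx).2⟩

lemma card_highPoints (z : ι → Ω → ℝ) (A : Finset ι) (u : ℝ) (ω : Ω) :
    ((highPoints z A u ω).card : ℝ) = (∑ x ∈ A, (Ici u).indicator 1 ∘ z x) ω := by
  simp [highPoints, Finset.sum_apply, indicator_apply]

lemma ncard_setOf_eq_card_highPoints {d : ℕ} (z : (Fin d → ℤ) → Ω → ℝ) (r R u : ℝ) (ω : Ω) :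
    Set.ncard {x : Fin d → ℤ | (r ≤ euclNorm d x ∧ euclNorm d x < R) ∧ u ≤ z x ω} =
      (highPoints z (latticeAnnulus d r R) u ω).card := by
  rw [← Set.ncard_coe_finset]
  congr 1
  ext x
  simp [highPoints, mem_latticeAnnulus]

variable [MeasurableSpace Ω] {μ : Measure Ω}

lemma integral_indicator_Ici_comp {X : Ω → ℝ} (hX : Measurable X) (u : ℝ) :
    μ[(Ici u).indicator 1 ∘ X] = μ.real {ω | u ≤ X ω} :=
  integral_indicator_one (hX measurableSet_Ici)

lemma iIndepFun_indicator_Ici_comp {z : ι → Ω → ℝ} (hindep : iIndepFun z μ) (u : ℝ) :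
    iIndepFun (fun x => (Ici u).indicator (1 : ℝ → ℝ) ∘ z x) μ :=
  hindep.comp _ fun _ => measurable_one.indicator measurableSet_Ici

lemma indicator_Ici_mem_Icc_zero_one (u r : ℝ) :
    (Ici u).indicator (1 : ℝ → ℝ) r ∈ Icc (0 : ℝ) 1 :=
  ⟨indicator_nonneg (fun _ _ => zero_le_one) _, indicator_le_self' (by simp) _⟩

lemma measureReal_card_highPoints_le_le_exp {z : ι → Ω → ℝ} (hindep : iIndepFun z μ)
    (hz : ∀ x, Measurable (z x)) {A : Finset ι} {u p c : ℝ}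
    (hp : ∀ x ∈ A, p ≤ μ.real {ω | u ≤ z x ω}) (hc : 4 * c ≤ A.card * p) :
    μ.real {ω | ((highPoints z A u ω).card : ℝ) ≤ c} ≤ Real.exp (-c) := by
  have hmean : A.card * p ≤ ∑ x ∈ A, μ[(Ici u).indicator 1 ∘ z x] := by
    simpa only [nsmul_eq_mul, integral_indicator_Ici_comp (hz _)] using
      Finset.card_nsmul_le_sum A _ p hp
  simp only [card_highPoints]
  exact (measureReal_sum_le_le_exp (iIndepFun_indicator_Ici_comp hindep u)
    (fun x => (measurable_one.indicator measurableSet_Ici).comp (hz x))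
    (fun x ω => indicator_Ici_mem_Icc_zero_one u (z x ω)) A c).trans
    (Real.exp_le_exp.2 (by linarith))

lemma measureReal_le_card_highPoints_le_exp {z : ι → Ω → ℝ} (hindep : iIndepFun z μ)
    (hz : ∀ x, Measurable (z x)) {A : Finset ι} {u p c : ℝ}
    (hp : ∀ x ∈ A, μ.real {ω | u ≤ z x ω} ≤ p) (hc : 4 * (A.card * p) ≤ c) :
    μ.real {ω | c ≤ ((highPoints z A u ω).card : ℝ)} ≤ Real.exp (-(c / 2)) := by
  have hmean : ∑ x ∈ A, μ[(Ici u).indicator 1 ∘ z x] ≤ A.card * p := by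
    simpa only [nsmul_eq_mul, integral_indicator_Ici_comp (hz _)] using
      Finset.sum_le_card_nsmul A _ p hp
  simp only [card_highPoints]
  exact (measureReal_le_sum_le_exp (iIndepFun_indicator_Ici_comp hindep u)
    (fun x => (measurable_one.indicator measurableSet_Ici).comp (hz x))
    (fun x ω => indicator_Ici_mem_Icc_zero_one u (z x ω)) A c).trans
    (Real.exp_le_exp.2 (by linarith))

end HighPoints

section Tail

variable {Ω : Type*} [MeasurableSpace Ω] {μ : Measure Ω} {d : ℕ} {α : ℝ}
  {z : (Fin d → ℤ) → Ω → ℝ}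

lemma IsScenery.measureReal_le_eq (hz : IsScenery d α μ z) (x : Fin d → ℤ) (u : ℝ) :
    μ.real {ω | u ≤ z x ω} = μ.real {ω | u ≤ z 0 ω} :=
  congrArg ENNReal.toReal ((hz.ident x).measure_mem_eq measurableSet_Ici)

lemma IsScenery.eventually_rpow_le_measureReal_le (hz : IsScenery d α μ z) (hα : 0 < α) {p : ℝ}
    (hp : p < -α) : ∀ᶠ r in atTop, r ^ p ≤ μ.real {ω | r ≤ z 0 ω} := by
  have := hz.prob
  filter_upwards [eventually_rpow_le_of_tendsto_log_div_log (fun _ => measureReal_nonneg)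
    (neg_neg_of_pos hα).ne hz.tail hp] with r hr
  exact hr.trans (measureReal_mono fun ω (hω : r < z 0 ω) => hω.le)

lemma IsScenery.eventually_measureReal_le_le_rpow (hz : IsScenery d α μ z) {p : ℝ}
    (hp : -α < p) : ∀ᶠ r in atTop, μ.real {ω | r ≤ z 0 ω} ≤ r ^ p := by
  have := hz.prob
  obtain ⟨q, hαq, hqp⟩ := exists_between hp
  have hhalf := (tendsto_id.atTop_div_const (two_pos (α := ℝ))).eventually
    (eventually_le_rpow_of_tendsto_log_div_log (fun _ => measureReal_nonneg) hz.tail hαq)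
  filter_upwards [hhalf, eventually_const_mul_rpow_le_rpow ((2 ^ q)⁻¹) hqp, eventually_gt_atTop 0]
    with r hr hqpr hr0
  calc μ.real {ω | r ≤ z 0 ω} ≤ μ.real {ω | r / 2 < z 0 ω} :=
        measureReal_mono fun ω (hω : r ≤ z 0 ω) => (half_lt_self hr0).trans_le hω
    _ ≤ (r / 2) ^ q := hr
    _ = (2 ^ q)⁻¹ * r ^ q := by rw [Real.div_rpow hr0.le two_pos.le, div_eq_inv_mul]
    _ ≤ r ^ p := hqpr

lemma IsScenery.eventually_measureReal_rpow_le_le_rpow (hz : IsScenery d α μ z) {ρ p : ℝ}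
    (hρ : 0 < ρ) (hp : -(α * ρ) < p) :
    ∀ᶠ x in atTop, μ.real {ω | x ^ ρ ≤ z 0 ω} ≤ x ^ p := by
  have hpρ : -α < p / ρ := by rwa [lt_div_iff₀ hρ, neg_mul]
  filter_upwards [(tendsto_rpow_atTop hρ).eventually (hz.eventually_measureReal_le_le_rpow hpρ),
    eventually_ge_atTop 0] with x hx hx0
  rwa [← Real.rpow_mul hx0, mul_div_cancel₀ p hρ.ne'] at hx

lemma IsScenery.eventually_rpow_le_measureReal_add_one_rpow_le (hz : IsScenery d α μ z)
    (hα : 0 < α) {ρ p : ℝ} (hρ : 0 < ρ) (hp : p < -(α * ρ)) :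
    ∀ᶠ x : ℝ in atTop, x ^ p ≤ μ.real {ω | (x + 1) ^ ρ ≤ z 0 ω} := by
  obtain ⟨q, hpq, hqα⟩ := exists_between hp
  have hqρ : q / ρ < -α := by rwa [div_lt_iff₀ hρ, neg_mul]
  have hq : q ≤ 0 := by linarith [mul_pos hα hρ]
  have htail := ((tendsto_rpow_atTop hρ).comp (tendsto_atTop_add_const_right atTop 1
    tendsto_id)).eventually (hz.eventually_rpow_le_measureReal_le hα hqρ)
  filter_upwards [htail, eventually_const_mul_rpow_le_rpow (2 ^ (-q)) hpq, eventually_ge_atTop 1]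
    with x hx hpqx hx1
  have hx0 : 0 < x := one_pos.trans_le hx1
  calc x ^ p = 2 ^ q * (2 ^ (-q) * x ^ p) := by
        rw [← mul_assoc, ← Real.rpow_add two_pos, add_neg_cancel, Real.rpow_zero, one_mul]
    _ ≤ 2 ^ q * x ^ q := by gcongr
    _ = (2 * x) ^ q := (Real.mul_rpow two_pos.le hx0.le).symm
    _ ≤ (x + 1) ^ q := Real.rpow_le_rpow_of_nonpos (by positivity) (by linarith) hq
    _ = ((x + 1) ^ ρ) ^ (q / ρ) := by
        rw [← Real.rpow_mul (by positivity), mul_div_cancel₀ q hρ.ne']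
    _ ≤ μ.real {ω | (x + 1) ^ ρ ≤ z 0 ω} := hx

end Tail

section ScaledAnnuli

/-- The points lying in the annulus `{y ∈ ℤ^d : k t^β ≤ |y| < (k + 1) t^β}` for every
`t ∈ [x, x + 1]`. -/
noncomputable def innerAnnulus (d : ℕ) (β : ℝ) (k : ℕ) (x : ℝ) : Finset (Fin d → ℤ) :=
  latticeAnnulus d (k * (x + 1) ^ β) ((k + 1) * x ^ β)

/-- An annulus containing `{y ∈ ℤ^d : k t^β ≤ |y| < (k + 1) t^β}` for every `t ∈ [x, x + 1]`. -/
noncomputable def outerAnnulus (d : ℕ) (β : ℝ) (k : ℕ) (x : ℝ) : Finset (Fin d → ℤ) :=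
  latticeAnnulus d (k * x ^ β) ((k + 1) * (x + 1) ^ β)

lemma innerAnnulus_subset_latticeAnnulus (d : ℕ) {β x t : ℝ} (hβ : 0 ≤ β) (hx : 0 ≤ x)
    (hxt : x ≤ t) (htx : t ≤ x + 1) (k : ℕ) :
    innerAnnulus d β k x ⊆ latticeAnnulus d (k * t ^ β) ((k + 1) * t ^ β) := by
  have ht : 0 ≤ t := hx.trans hxt
  exact latticeAnnulus_subset_latticeAnnulus (by gcongr) (by gcongr)

lemma latticeAnnulus_subset_outerAnnulus (d : ℕ) {β x t : ℝ} (hβ : 0 ≤ β) (hx : 0 ≤ x)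
    (hxt : x ≤ t) (htx : t ≤ x + 1) (k : ℕ) :
    latticeAnnulus d (k * t ^ β) ((k + 1) * t ^ β) ⊆ outerAnnulus d β k x := by
  have ht : 0 ≤ t := hx.trans hxt
  exact latticeAnnulus_subset_latticeAnnulus (by gcongr) (by gcongr)

variable {d : ℕ} {β : ℝ}

lemma add_one_mul_rpow_sub_rpow_le {k x : ℝ} (hβ₀ : 0 ≤ β) (hβ₁ : β ≤ 1) (hx : 0 < x)
    (hk : k + 1 ≤ x / 4) : (k + 1) * ((x + 1) ^ β - x ^ β) ≤ x ^ β / 4 := by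
  have hmono : x ^ β ≤ (x + 1) ^ β := by gcongr; linarith
  calc (k + 1) * ((x + 1) ^ β - x ^ β) ≤ x / 4 * ((x + 1) ^ β - x ^ β) := by gcongr
    _ = x * ((x + 1) ^ β - x ^ β) / 4 := by ring
    _ ≤ x ^ β / 4 := by gcongr; exact mul_add_one_rpow_sub_rpow_le hx hβ₀ hβ₁

lemma exists_eventually_mul_le_card_innerAnnulus [NeZero d] (hβ₀ : 0 < β) (hβ₁ : β ≤ 1) :
    ∃ C > 0, ∀ᶠ x : ℝ in atTop, ∀ k : ℕ, (k : ℝ) + 1 ≤ x / 4 →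
      C * ((k : ℝ) ^ (d - 1) * x ^ (β * d)) ≤ (innerAnnulus d β k x).card := by
  refine ⟨volume.real (Metric.ball (0 : EuclideanSpace ℝ (Fin d)) 1) / 2,
    half_pos (ENNReal.toReal_pos
    (Metric.measure_ball_pos volume 0 one_pos).ne' measure_ball_lt_top.ne), ?_⟩
  filter_upwards [(tendsto_rpow_atTop hβ₀).eventually_ge_atTop (8 * √d), eventually_gt_atTop 0]
    with x hsqrt hx k hk
  rw [Real.rpow_mul_natCast hx.le]
  exact le_card_latticeAnnulus_mul_mul (by gcongr; linarith)
    (add_one_mul_rpow_sub_rpow_le hβ₀.le hβ₁ hx hk) (by linarith)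

lemma exists_eventually_card_outerAnnulus_le_mul [NeZero d] (hβ₀ : 0 < β) (hβ₁ : β ≤ 1) :
    ∃ C, ∀ᶠ x : ℝ in atTop, ∀ k : ℕ, 1 ≤ k → (k : ℝ) + 1 ≤ x / 4 →
      (outerAnnulus d β k x).card ≤ C * ((k : ℝ) ^ (d - 1) * x ^ (β * d)) := by
  refine ⟨volume.real (Metric.ball (0 : EuclideanSpace ℝ (Fin d)) 1) * (2 * d * 3 ^ (d - 1)), ?_⟩
  filter_upwards [(tendsto_rpow_atTop hβ₀).eventually_ge_atTop (8 * √d), eventually_gt_atTop 0]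
    with x hsqrt hx k hk hkx
  rw [Real.rpow_mul_natCast hx.le]
  exact card_latticeAnnulus_mul_mul_le hk (by gcongr; linarith)
    (add_one_mul_rpow_sub_rpow_le hβ₀.le hβ₁ hx hkx) (by linarith)

variable {Ω : Type*} [MeasurableSpace Ω] {μ : Measure Ω} {α ρ q : ℝ}
  {z : (Fin d → ℤ) → Ω → ℝ}

lemma IsScenery.eventually_mul_rpow_le_card_innerAnnulus_mul [NeZero d]
    (hz : IsScenery d α μ z) (hα : 0 < α) (hρ : 0 < ρ) (hβ₀ : 0 < β) (hβ₁ : β ≤ 1)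
    (hq : q < β * d - α * ρ) :
    ∀ᶠ x : ℝ in atTop, ∀ k : ℕ, (k : ℝ) + 1 ≤ x / 4 →
      4 * ((k : ℝ) ^ (d - 1) * x ^ q) ≤
        (innerAnnulus d β k x).card * μ.real {ω | (x + 1) ^ ρ ≤ z 0 ω} := by
  obtain ⟨C, hC, hcard⟩ := exists_eventually_mul_le_card_innerAnnulus (d := d) hβ₀ hβ₁
  obtain ⟨p, hqp, hp⟩ := exists_between (show q - β * d < -(α * ρ) by linarith)
  filter_upwards [hcard, hz.eventually_rpow_le_measureReal_add_one_rpow_le hα hρ hp,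
    eventually_const_mul_rpow_le_rpow (4 / C) (show q < β * d + p by linarith),
    eventually_gt_atTop 0] with x hcard htail hconst hx k hk
  calc 4 * ((k : ℝ) ^ (d - 1) * x ^ q) = C * (k ^ (d - 1) * (4 / C * x ^ q)) := by field_simp
    _ ≤ C * (k ^ (d - 1) * x ^ (β * d + p)) := by gcongr
    _ = C * (k ^ (d - 1) * x ^ (β * d)) * x ^ p := by rw [Real.rpow_add hx]; ring
    _ ≤ (innerAnnulus d β k x).card * μ.real {ω | (x + 1) ^ ρ ≤ z 0 ω} := by
        gcongr
        exact hcard k hk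

lemma IsScenery.eventually_card_outerAnnulus_mul_le_mul_rpow [NeZero d]
    (hz : IsScenery d α μ z) (hρ : 0 < ρ) (hβ₀ : 0 < β) (hβ₁ : β ≤ 1)
    (hq : β * d - α * ρ < q) :
    ∀ᶠ x : ℝ in atTop, ∀ k : ℕ, 1 ≤ k → (k : ℝ) + 1 ≤ x / 4 →
      4 * ((outerAnnulus d β k x).card * μ.real {ω | x ^ ρ ≤ z 0 ω}) ≤
        (k : ℝ) ^ (d - 1) * x ^ q := by
  obtain ⟨C, hcard⟩ := exists_eventually_card_outerAnnulus_le_mul (d := d) hβ₀ hβ₁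
  obtain ⟨p, hp, hpq⟩ := exists_between (show -(α * ρ) < q - β * d by linarith)
  filter_upwards [hcard, hz.eventually_measureReal_rpow_le_le_rpow hρ hp,
    eventually_const_mul_rpow_le_rpow (4 * C) (show β * d + p < q by linarith),
    eventually_gt_atTop 0] with x hcard htail hconst hx k hk hkx
  have hcardk := hcard k hk hkx
  have hbound : 0 ≤ C * (k ^ (d - 1) * x ^ (β * d)) := (Nat.cast_nonneg _).trans hcardk
  calc 4 * ((outerAnnulus d β k x).card * μ.real {ω | x ^ ρ ≤ z 0 ω})
      ≤ 4 * (C * (k ^ (d - 1) * x ^ (β * d)) * x ^ p) := by gcongr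
    _ = k ^ (d - 1) * (4 * C * x ^ (β * d + p)) := by rw [Real.rpow_add hx]; ring
    _ ≤ k ^ (d - 1) * x ^ q := by gcongr

end ScaledAnnuli

section HighPointsInAnnuli

lemma summable_card_Icc_mul_exp_neg_mul_rpow {c q : ℝ} (hc : 0 < c) (hq : 0 < q) (m : ℕ) :
    Summable fun n : ℕ => ((Finset.Icc 1 (n / m)).card : ℝ) * Real.exp (-c * (n : ℝ) ^ q) := by
  refine (summable_mul_exp_neg_mul_rpow hc hq).of_nonneg_of_le (fun n => by positivity) fun n => ?_
  gcongr
  simpa only [Nat.card_Icc, Nat.add_sub_cancel] using Nat.div_le_self n m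

lemma one_le_and_add_one_le_of_mem_Icc_div {n k : ℕ} (hk : k ∈ Finset.Icc 1 (n / 8)) :
    1 ≤ k ∧ (k : ℝ) + 1 ≤ n / 4 := by
  obtain ⟨hk₁, hkn⟩ := Finset.mem_Icc.1 hk
  refine ⟨hk₁, ?_⟩
  rw [le_div_iff₀ four_pos]
  exact_mod_cast (by omega : (k + 1) * 4 ≤ n)

variable {d : ℕ} {α β ρ q : ℝ} {Ω : Type*} [MeasurableSpace Ω] {μ : Measure Ω}
  {z : (Fin d → ℤ) → Ω → ℝ}

lemma IsScenery.ae_eventually_mul_rpow_lt_card_highPoints_innerAnnulus [NeZero d]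
    (hz : IsScenery d α μ z) (hα : 0 < α) (hρ : 0 < ρ) (hβ₀ : 0 < β) (hβ₁ : β ≤ 1)
    (hq₀ : 0 < q) (hq : q < β * d - α * ρ) :
    ∀ᵐ ω ∂μ, ∀ᶠ n : ℕ in atTop, ∀ k ∈ Finset.Icc 1 (n / 8),
      (k : ℝ) ^ (d - 1) * (n : ℝ) ^ q <
        (highPoints z (innerAnnulus d β k n) (((n : ℝ) + 1) ^ ρ) ω).card := by
  have := hz.prob
  have hbad : ∀ᶠ n : ℕ in atTop, ∀ k ∈ Finset.Icc 1 (n / 8),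
      μ.real {ω | ((highPoints z (innerAnnulus d β k n) (((n : ℝ) + 1) ^ ρ) ω).card : ℝ) ≤
        (k : ℝ) ^ (d - 1) * (n : ℝ) ^ q} ≤ Real.exp (-1 * (n : ℝ) ^ q) := by
    filter_upwards [tendsto_natCast_atTop_atTop.eventually
      (hz.eventually_mul_rpow_le_card_innerAnnulus_mul hα hρ hβ₀ hβ₁ hq)] with n hn k hk
    obtain ⟨hk₁, hkn⟩ := one_le_and_add_one_le_of_mem_Icc_div hk
    refine (measureReal_card_highPoints_le_le_exp hz.indep hz.meas
      (fun x _ => (hz.measureReal_le_eq x _).ge) (hn k hkn)).trans (Real.exp_le_exp.2 ?_)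
    rw [neg_one_mul]
    exact neg_le_neg <| le_mul_of_one_le_left (by positivity)
      (one_le_pow₀ (by exact_mod_cast hk₁))
  filter_upwards [ae_eventually_forall_mem_notMem
    (summable_card_Icc_mul_exp_neg_mul_rpow one_pos hq₀ 8) hbad] with ω hω
  filter_upwards [hω] with n hn k hk
  exact not_le.1 (hn k hk)

lemma IsScenery.ae_eventually_card_highPoints_outerAnnulus_lt_mul_rpow [NeZero d]
    (hz : IsScenery d α μ z) (hρ : 0 < ρ) (hβ₀ : 0 < β) (hβ₁ : β ≤ 1)
    (hq₀ : 0 < q) (hq : β * d - α * ρ < q) :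
    ∀ᵐ ω ∂μ, ∀ᶠ n : ℕ in atTop, ∀ k ∈ Finset.Icc 1 (n / 8),
      ((highPoints z (outerAnnulus d β k n) ((n : ℝ) ^ ρ) ω).card : ℝ) <
        (k : ℝ) ^ (d - 1) * (n : ℝ) ^ q := by
  have := hz.prob
  have hbad : ∀ᶠ n : ℕ in atTop, ∀ k ∈ Finset.Icc 1 (n / 8),
      μ.real {ω | (k : ℝ) ^ (d - 1) * (n : ℝ) ^ q ≤
        ((highPoints z (outerAnnulus d β k n) ((n : ℝ) ^ ρ) ω).card : ℝ)} ≤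
          Real.exp (-(1 / 2) * (n : ℝ) ^ q) := by
    filter_upwards [tendsto_natCast_atTop_atTop.eventually
      (hz.eventually_card_outerAnnulus_mul_le_mul_rpow hρ hβ₀ hβ₁ hq)] with n hn k hk
    obtain ⟨hk₁, hkn⟩ := one_le_and_add_one_le_of_mem_Icc_div hk
    refine (measureReal_le_card_highPoints_le_exp hz.indep hz.meas
      (fun x _ => (hz.measureReal_le_eq x _).le) (hn k hk₁ hkn)).trans (Real.exp_le_exp.2 ?_)
    have hnk : (n : ℝ) ^ q ≤ (k : ℝ) ^ (d - 1) * (n : ℝ) ^ q :=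
      le_mul_of_one_le_left (by positivity) (one_le_pow₀ (by exact_mod_cast hk₁))
    linarith
  filter_upwards [ae_eventually_forall_mem_notMem
    (summable_card_Icc_mul_exp_neg_mul_rpow one_half_pos hq₀ 8) hbad] with ω hω
  filter_upwards [hω] with n hn k hk
  exact not_le.1 (hn k hk)

lemma mem_Icc_floor_div_of_le_div {t : ℝ} {k m : ℕ} (hm : 0 < m) (hk : 1 ≤ k)
    (hkt : (k : ℝ) ≤ t / m) : k ∈ Finset.Icc 1 (⌊t⌋₊ / m) := by
  refine Finset.mem_Icc.2 ⟨hk, (Nat.le_div_iff_mul_le hm).2 (Nat.le_floor ?_)⟩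
  rw [Nat.cast_mul]
  exact (le_div_iff₀ (by exact_mod_cast hm)).1 hkt

lemma IsScenery.ae_eventually_mul_rpow_lt_card_highPoints [NeZero d]
    (hz : IsScenery d α μ z) (hα : 0 < α) (hρ : 0 < ρ) (hβ₀ : 0 < β) (hβ₁ : β ≤ 1)
    (hαρ : α * ρ < β * d) (hq : q < β * d - α * ρ) :
    ∀ᵐ ω ∂μ, ∀ᶠ t : ℝ in atTop, ∀ k : ℕ, 1 ≤ k → (k : ℝ) ≤ t / 8 →
      (k : ℝ) ^ (d - 1) * t ^ q <
        (highPoints z (latticeAnnulus d (k * t ^ β) ((k + 1) * t ^ β)) (t ^ ρ) ω).card := by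
  obtain ⟨p, hp, hpq⟩ := exists_between (max_lt hq (sub_pos.2 hαρ))
  obtain ⟨hqp, hp₀⟩ := max_lt_iff.1 hp
  filter_upwards [hz.ae_eventually_mul_rpow_lt_card_highPoints_innerAnnulus hα hρ hβ₀ hβ₁ hp₀ hpq]
    with ω hω
  filter_upwards [tendsto_nat_floor_atTop.eventually hω,
    eventually_const_mul_rpow_le_rpow (2 ^ p) hqp, eventually_ge_atTop 2] with t hfloor hconst ht k
    hk hkt
  have hle : (⌊t⌋₊ : ℝ) ≤ t := Nat.floor_le (by linarith)
  have hlt : t < ⌊t⌋₊ + 1 := Nat.lt_floor_add_one t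
  have hrpow : t ^ q ≤ (⌊t⌋₊ : ℝ) ^ p := by
    calc t ^ q ≤ t ^ p / 2 ^ p := by rwa [le_div_iff₀' (by positivity)]
      _ = (t / 2) ^ p := (Real.div_rpow (by linarith) two_pos.le p).symm
      _ ≤ (⌊t⌋₊ : ℝ) ^ p := by gcongr; linarith
  calc (k : ℝ) ^ (d - 1) * t ^ q ≤ (k : ℝ) ^ (d - 1) * (⌊t⌋₊ : ℝ) ^ p := by gcongr
    _ < (highPoints z (innerAnnulus d β k ⌊t⌋₊) (((⌊t⌋₊ : ℝ) + 1) ^ ρ) ω).card :=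
        hfloor k (mem_Icc_floor_div_of_le_div (by simp) hk hkt)
    _ ≤ (highPoints z (latticeAnnulus d (k * t ^ β) ((k + 1) * t ^ β)) (t ^ ρ) ω).card := by
        exact_mod_cast Finset.card_le_card <| highPoints_subset_highPoints z
          (innerAnnulus_subset_latticeAnnulus d hβ₀.le (Nat.cast_nonneg _) hle hlt.le k)
          (Real.rpow_le_rpow (by linarith) hlt.le hρ.le) ω

lemma IsScenery.ae_eventually_card_highPoints_lt_mul_rpow [NeZero d]
    (hz : IsScenery d α μ z) (hρ : 0 < ρ) (hβ₀ : 0 < β) (hβ₁ : β ≤ 1)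
    (hαρ : α * ρ < β * d) (hq : β * d - α * ρ < q) :
    ∀ᵐ ω ∂μ, ∀ᶠ t : ℝ in atTop, ∀ k : ℕ, 1 ≤ k → (k : ℝ) ≤ t / 8 →
      ((highPoints z (latticeAnnulus d (k * t ^ β) ((k + 1) * t ^ β)) (t ^ ρ) ω).card : ℝ) <
        (k : ℝ) ^ (d - 1) * t ^ q := by
  have hq₀ : 0 < q := (sub_pos.2 hαρ).trans hq
  filter_upwards [hz.ae_eventually_card_highPoints_outerAnnulus_lt_mul_rpow hρ hβ₀ hβ₁ hq₀ hq]
    with ω hω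
  filter_upwards [tendsto_nat_floor_atTop.eventually hω, eventually_ge_atTop 0] with t hfloor ht k
    hk hkt
  have hle : (⌊t⌋₊ : ℝ) ≤ t := Nat.floor_le ht
  have hlt : t < ⌊t⌋₊ + 1 := Nat.lt_floor_add_one t
  calc ((highPoints z (latticeAnnulus d (k * t ^ β) ((k + 1) * t ^ β)) (t ^ ρ) ω).card : ℝ)
      ≤ (highPoints z (outerAnnulus d β k ⌊t⌋₊) ((⌊t⌋₊ : ℝ) ^ ρ) ω).card := by
        exact_mod_cast Finset.card_le_card <| highPoints_subset_highPoints z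
          (latticeAnnulus_subset_outerAnnulus d hβ₀.le (Nat.cast_nonneg _) hle hlt.le k)
          (by gcongr) ω
    _ < (k : ℝ) ^ (d - 1) * (⌊t⌋₊ : ℝ) ^ q :=
        hfloor k (mem_Icc_floor_div_of_le_div (by simp) hk hkt)
    _ ≤ (k : ℝ) ^ (d - 1) * t ^ q := by gcongr

end HighPointsInAnnuli

theorem stmt16_general {d : ℕ} {α ρ β γ p q : ℝ} (hα : 0 < α) (hρ : 0 < ρ)
    (hαρ : α * ρ < β * d) (hp : p < β * d - α * ρ) (hq : β * d - α * ρ < q)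
    {Ω : Type*} [MeasurableSpace Ω] {μ : Measure Ω} {z : (Fin d → ℤ) → Ω → ℝ}
    (hz : IsScenery d α μ z) :
    ∀ᵐ ω ∂μ, ∀ᶠ t : ℝ in atTop, ∀ k : ℕ, 1 ≤ k → (k : ℝ) ≤ t ^ γ →
      (k : ℝ) ^ (d - 1) * t ^ p
          < (Set.ncard {x : Fin d → ℤ |
              ((k : ℝ) * t ^ β ≤ euclNorm d x ∧ euclNorm d x < ((k : ℝ) + 1) * t ^ β) ∧
              t ^ ρ ≤ z x ω} : ℝ) ∧
      (Set.ncard {x : Fin d → ℤ |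
              ((k : ℝ) * t ^ β ≤ euclNorm d x ∧ euclNorm d x < ((k : ℝ) + 1) * t ^ β) ∧
              t ^ ρ ≤ z x ω} : ℝ)
          < (k : ℝ) ^ (d - 1) * t ^ q := by
  have hβd : 0 < β * d := (mul_pos hα hρ).trans hαρ
  have hβ : 0 < β := pos_of_mul_pos_left hβd d.cast_nonneg
  have : NeZero d := ⟨fun h => by simp [h] at hβd⟩
  obtain ⟨M, hβM, hγM, hM⟩ : ∃ M, β ≤ M ∧ γ < M ∧ 0 < M :=
    ⟨max β (γ + 1), le_max_left _ _, (lt_add_one γ).trans_le (le_max_right _ _),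
      hβ.trans_le (le_max_left _ _)⟩
  have hβM₁ : β / M ≤ 1 := (div_le_one hM).2 hβM
  have hdiv : β / M * d - α * (ρ / M) = (β * d - α * ρ) / M := by ring
  have hαρM : α * (ρ / M) < β / M * d := by
    rw [← sub_pos, hdiv]
    exact div_pos (sub_pos.2 hαρ) hM
  filter_upwards [
    hz.ae_eventually_mul_rpow_lt_card_highPoints hα (div_pos hρ hM) (div_pos hβ hM) hβM₁ hαρM
      (hdiv ▸ div_lt_div_of_pos_right hp hM),
    hz.ae_eventually_card_highPoints_lt_mul_rpow (div_pos hρ hM) (div_pos hβ hM) hβM₁ hαρM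
      (hdiv ▸ div_lt_div_of_pos_right hq hM)] with ω hlower hupper
  filter_upwards [(tendsto_rpow_atTop hM).eventually hlower,
    (tendsto_rpow_atTop hM).eventually hupper, eventually_const_mul_rpow_le_rpow 8 hγM,
    eventually_ge_atTop 0] with t hlower hupper hrange ht k hk hkt
  have hscale (a : ℝ) : (t ^ M) ^ (a / M) = t ^ a := by
    rw [← Real.rpow_mul ht, mul_div_cancel₀ a hM.ne']
  simp only [hscale] at hlower hupper
  simp only [ncard_setOf_eq_card_highPoints]
  exact ⟨hlower k hk (by linarith), hupper k hk (by linarith)⟩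

/-- Lemma (number of high points in annuli): for `d ≥ 3`, `0 < α < d/2`,
`ρ ∈ (max(1/α,1), d/(2α))` and `ε > 0` with `αρ/d + ε < 1/2`, ℙ-a.s., for all large `t`
and all `1 ≤ k ≤ t^{1/2−αρ/d−ε}`, the number of points of the annulus
`D(k) = {x : k t^{αρ/d+ε} ≤ |x| < (k+1) t^{αρ/d+ε}}` with `z(x) ≥ t^ρ` lies strictly
between `k^{d−1} t^{(d−1)ε}` and `k^{d−1} t^{(d+1)ε}`. -/
theorem stmt16 (d : ℕ) (hd : 3 ≤ d) (α ρ ε : ℝ) (hα : 0 < α) (hαd : α < d / 2)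
    (hρ₁ : max (1 / α) 1 < ρ) (hρ₂ : ρ < d / (2 * α))
    (hε : 0 < ε) (hε' : α * ρ / d + ε < 1 / 2)
    {Ωz : Type*} [MeasurableSpace Ωz]
    (μ : Measure Ωz) (z : (Fin d → ℤ) → Ωz → ℝ) (hz : IsScenery d α μ z) :
    ∀ᵐ ζ ∂ μ, ∀ᶠ t in (atTop : Filter ℝ), ∀ k : ℕ, 1 ≤ k →
      (k : ℝ) ≤ t ^ ((1 : ℝ) / 2 - α * ρ / d - ε) →
      (k : ℝ) ^ (d - 1) * t ^ (((d : ℝ) - 1) * ε)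
          < (Set.ncard {x : Fin d → ℤ |
              ((k : ℝ) * t ^ (α * ρ / d + ε) ≤ euclNorm d x ∧
                euclNorm d x < ((k : ℝ) + 1) * t ^ (α * ρ / d + ε)) ∧
              t ^ ρ ≤ z x ζ} : ℝ) ∧
      (Set.ncard {x : Fin d → ℤ |
              ((k : ℝ) * t ^ (α * ρ / d + ε) ≤ euclNorm d x ∧
                euclNorm d x < ((k : ℝ) + 1) * t ^ (α * ρ / d + ε)) ∧
              t ^ ρ ≤ z x ζ} : ℝ)
          < (k : ℝ) ^ (d - 1) * t ^ (((d : ℝ) + 1) * ε) := by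
  have hd₀ : (0 : ℝ) < d := by exact_mod_cast three_pos.trans_le hd
  have hρ : 0 < ρ := one_pos.trans ((le_max_right _ _).trans_lt hρ₁)
  have hdε : 0 < d * ε := mul_pos hd₀ hε
  have hβ : (α * ρ / d + ε) * d = α * ρ + d * ε := by
    rw [add_mul, div_mul_cancel₀ _ hd₀.ne', mul_comm ε]
  apply stmt16_general hα hρ _ _ _ hz <;> linarith
end
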